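/- Let f be a bounded analytic function on the open unit disc 𝔻, not identically zero, such that log|f| admits the representation log|f(z)| = ∫_𝔻 log(|z−ζ|/|1−z·conj(ζ)|) dμ(ζ) − (1/2π)∫₀^{2π} ((1−|z|²)/|e^{iθ}−z|²) dψ(θ) + C for all z outside the zero set of f, where μ is the Riesz measure of log|f| (the sum of unit point masses at the zeros of f counted with multiplicity, satisfying ∫_𝔻 (1−|ζ|) dμ(ζ) < ∞), ψ is a finite positive Borel measure on [0,2π), and C ∈ ℝ. Let λ be the complete measure of log|f|, i.e. λ(M) = ∫_{𝔻∩M} (1−|ζ|) dμ(ζ) + ψ(M ∩ ∂𝔻). Let γ ∈ (0,1] and p ∈ (1,∞). Then m_p(r, log|f|) = O((1−r)^{γ−1}) as r ↑ 1 if and only if (∫₀^{2π} λ(C(φ,δ))^p dφ)^{1/p} = O(δ^γ) as δ ↓ 0 (for 0 < δ < 1). -/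

import Mathlib

open MeasureTheory Complex

/-- The Carleson box `C(φ,δ) = {ζ ∈ closure 𝔻 : |ζ| ≥ 1-δ, |arg ζ - φ| ≤ πδ}`
(the angular condition is expressed via a representative `θ` of the argument,
so that it is `2π`-periodic in `φ`). -/
noncomputable def carlesonBox (φ δ : ℝ) : Set ℂ :=
  {ζ : ℂ | ‖ζ‖ ≤ 1 ∧ 1 - δ ≤ ‖ζ‖ ∧
    ∃ θ : ℝ, |θ - φ| ≤ Real.pi * δ ∧
      ζ = (‖ζ‖ : ℂ) * Complex.exp (θ * Complex.I)}

/-- The `p`-th integral mean `m_p(r,u) = ((1/2π) ∫₀^{2π} |u(re^{iθ})|^p dθ)^{1/p}`. -/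
noncomputable def mpMean (p r : ℝ) (u : ℂ → ℝ) : ℝ :=
  ((1 / (2 * Real.pi)) *
      ∫ θ in (0 : ℝ)..(2 * Real.pi),
        |u ((r : ℂ) * Complex.exp (θ * Complex.I))| ^ p) ^ (1 / p)

/-!
The function `log |f|` is a constant minus the sum of the Green potential of `μ` and the Poisson
integral of `ψ`; the constant is harmless because `γ ≤ 1`. Put `d = |1 - z * conj ζ|`. The identity
`d² - |z - ζ|² = (1 - |z|²) (1 - |ζ|²)` says that `1 - ρ² = (1 - |ζ|²) P(z, ζ)` for the
pseudo-hyperbolic distance `ρ = |z - ζ| / d` and `P(z, ζ) = (1 - |z|²) / d²`. As `-log ρ² ≥ 1 - ρ²`,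
the potential dominates the integral of `P(z, ·)` against the complete measure `λ`. For
`z = (1 - δ) exp (iφ)` the kernel `P(z, ·)` is at least of order `1 / δ` on `C(φ, δ)`, so
`λ(C(φ, δ))` is at most of order `δ` times the potential at `z`.

Conversely, for `ρ ≥ 1 / 2` the Green function is at most `4 (1 - |ζ|) P(z, ζ)`, and `P(z, ·)` is
dominated by a sum over `k` of indicators of the boxes `C(φ, 4 * 2 ^ k * δ)` with weights
`2 / (4 ^ k δ)`, which Minkowski's inequality sums geometrically. For `ρ < 1 / 2` the pole `ζ` lies
in a box of size comparable with `δ` around `z` where `1 - |ζ|` is comparable with `δ`; there the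
logarithmic singularity is integrated in `φ` over arcs of length comparable with `δ`, uniformly
in `ζ`.
-/

open Set Metric Topology
open scoped ENNReal ComplexConjugate Real

section IntegralInequalities

variable {α β : Type*} [MeasurableSpace α] [MeasurableSpace β] {μ : Measure α} {ν : Measure β}
  {p : ℝ}

lemma eLpNorm'_ennreal_const_mul (hp : 0 < p) {c : ℝ≥0∞} (hc : c ≠ ∞) (f : α → ℝ≥0∞) :
    eLpNorm' (fun x ↦ c * f x) p μ = c * eLpNorm' f p μ := by
  simp only [eLpNorm'_eq_lintegral_enorm, enorm_eq_self, ENNReal.mul_rpow_of_nonneg _ _ hp.le]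
  rw [lintegral_const_mul' _ _ (ENNReal.rpow_ne_top_of_nonneg hp.le hc),
    ENNReal.mul_rpow_of_nonneg _ _ (by positivity), one_div, ENNReal.rpow_rpow_inv hp.ne']

lemma lintegral_rpow_le_measure_univ_rpow_mul (hp : 1 ≤ p) {f : α → ℝ≥0∞}
    (hf : AEMeasurable f μ) :
    (∫⁻ x, f x ∂μ) ^ p ≤ μ univ ^ (p - 1) * ∫⁻ x, f x ^ p ∂μ := by
  have hp₀ : 0 < p := by linarith
  have h := eLpNorm'_le_eLpNorm'_mul_rpow_measure_univ zero_lt_one hp hf.aestronglyMeasurable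
  simp only [eLpNorm'_eq_lintegral_enorm, enorm_eq_self, ENNReal.rpow_one, div_one] at h
  calc (∫⁻ x, f x ∂μ) ^ p
      ≤ ((∫⁻ x, f x ^ p ∂μ) ^ (1 / p) * μ univ ^ (1 - 1 / p)) ^ p := by gcongr
    _ = μ univ ^ (p - 1) * ∫⁻ x, f x ^ p ∂μ := by
      rw [ENNReal.mul_rpow_of_nonneg _ _ hp₀.le, one_div, ENNReal.rpow_inv_rpow hp₀.ne',
        ← ENNReal.rpow_mul, sub_mul, one_mul, inv_mul_cancel₀ hp₀.ne', mul_comm]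

lemma lintegral_rpow_lintegral_le [SFinite μ] [SFinite ν] (hp : 1 ≤ p) {F : α → β → ℝ≥0∞}
    (hF : Measurable (Function.uncurry F)) {B : ℝ≥0∞}
    (hB : ∀ᵐ y ∂ν, ∫⁻ x, F x y ^ p ∂μ ≤ B) :
    ∫⁻ x, (∫⁻ y, F x y ∂ν) ^ p ∂μ ≤ ν univ ^ p * B :=
  calc ∫⁻ x, (∫⁻ y, F x y ∂ν) ^ p ∂μ
      ≤ ∫⁻ x, ν univ ^ (p - 1) * ∫⁻ y, F x y ^ p ∂ν ∂μ :=
        lintegral_mono fun x ↦ lintegral_rpow_le_measure_univ_rpow_mul hp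
          (hF.comp measurable_prodMk_left).aemeasurable
    _ = ν univ ^ (p - 1) * ∫⁻ y, ∫⁻ x, F x y ^ p ∂μ ∂ν := by
        rw [lintegral_const_mul _ (Measurable.lintegral_prod_right'
          (f := fun q : α × β ↦ F q.1 q.2 ^ p) (hF.pow_const p)),
          lintegral_lintegral_swap (hF.pow_const p).aemeasurable]
    _ ≤ ν univ ^ (p - 1) * (B * ν univ) := by
        gcongr
        exact (lintegral_mono_ae hB).trans_eq (lintegral_const B)
    _ = ν univ ^ p * B := by
        rw [mul_comm B, ← mul_assoc]
        nth_rewrite 2 [← ENNReal.rpow_one (ν univ)]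
        rw [← ENNReal.rpow_add_of_nonneg _ _ (by linarith) zero_le_one, sub_add_cancel]

lemma ofReal_integral_norm_rpow_eq_eLpNorm' (hp : 0 < p) {g : α → ℝ}
    (hg : AEStronglyMeasurable g μ) (hfin : eLpNorm' g p μ ≠ ∞) :
    ENNReal.ofReal ((∫ x, |g x| ^ p ∂μ) ^ (1 / p)) = eLpNorm' g p μ := by
  have h_norm : eLpNorm g (ENNReal.ofReal p) μ = eLpNorm' g p μ := by
    rw [eLpNorm_eq_eLpNorm' (by simpa) ENNReal.ofReal_ne_top, ENNReal.toReal_ofReal hp.le]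
  have h_memLp : MemLp g (ENNReal.ofReal p) μ := ⟨hg, by rwa [h_norm, lt_top_iff_ne_top]⟩
  rw [← h_norm, h_memLp.eLpNorm_eq_integral_rpow_norm (by simpa) ENNReal.ofReal_ne_top,
    ENNReal.toReal_ofReal hp.le, one_div]
  simp only [Real.norm_eq_abs]

lemma eLpNorm'_le_const_add {E F : Type*} [ENorm E] [ENorm F] (hp : 1 ≤ p) {f : α → E} {g : α → F}
    {c : ℝ≥0∞} (hg : AEMeasurable (fun x ↦ ‖g x‖ₑ) μ) (h : ∀ᵐ x ∂μ, ‖f x‖ₑ ≤ c + ‖g x‖ₑ) :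
    eLpNorm' f p μ ≤ c * μ univ ^ (1 / p) + eLpNorm' g p μ := by
  have hp₀ : 0 < p := by linarith
  calc eLpNorm' f p μ ≤ eLpNorm' ((fun _ ↦ c) + fun x ↦ ‖g x‖ₑ) p μ :=
        eLpNorm'_mono_enorm_ae hp₀.le h
    _ ≤ eLpNorm' (fun _ ↦ c) p μ + eLpNorm' (fun x ↦ ‖g x‖ₑ) p μ :=
        eLpNorm'_add_le aestronglyMeasurable_const hg.aestronglyMeasurable hp
    _ = c * μ univ ^ (1 / p) + eLpNorm' g p μ := by
        rw [eLpNorm'_const _ hp₀, enorm_eq_self]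
        rfl

end IntegralInequalities

lemma setLIntegral_Ioc_zero_nat_mul_le {F G : ℝ → ℝ≥0∞} {h : ℝ} (hh : 0 ≤ h)
    (hFG : ∀ a, ∫⁻ φ in Ioc a (a + h), F φ ≤ ∫⁻ φ in Ioc a (a + h), G φ) (n : ℕ) :
    ∫⁻ φ in Ioc 0 (n * h), F φ ≤ ∫⁻ φ in Ioc 0 (n * h), G φ := by
  have split_last (H : ℝ → ℝ≥0∞) (n : ℕ) :
      ∫⁻ φ in Ioc 0 ((n + 1 : ℕ) * h), H φ
        = (∫⁻ φ in Ioc 0 (n * h), H φ) + ∫⁻ φ in Ioc (n * h) (n * h + h), H φ := by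
    rw [← lintegral_union measurableSet_Ioc (Ioc_disjoint_Ioc.2 (by simp)),
      Ioc_union_Ioc_eq_Ioc (by positivity) (by linarith)]
    push_cast
    rw [add_one_mul]
  induction n with
  | zero => simp
  | succ n ih =>
    rw [split_last, split_last]
    exact add_le_add ih (hFG _)

lemma setLIntegral_Icc_neg_comp_abs {g : ℝ → ℝ≥0∞} (hg : Measurable g) {R : ℝ} (hR : 0 ≤ R) :
    ∫⁻ x in Icc (-R) R, g |x| = 2 * ∫⁻ x in Ioc 0 R, g x := by
  have h_pos : ∫⁻ x in Ioc 0 R, g |x| = ∫⁻ x in Ioc 0 R, g x :=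
    setLIntegral_congr_fun measurableSet_Ioc fun x hx ↦ by simp only [abs_of_pos hx.1]
  have h_neg : ∫⁻ x in Ico (-R) 0, g |x| = ∫⁻ x in Ioc 0 R, g x := by
    rw [← h_pos, ← (Measure.measurePreserving_neg volume).setLIntegral_comp_preimage
      (measurableSet_Ioc (a := (0 : ℝ)) (b := R)) (f := fun x ↦ g |x|) (hg.comp measurable_abs)]
    simp
  rw [← setLIntegral_congr Ico_ae_eq_Icc,
    ← Ico_union_Ico_eq_Ico (neg_nonpos.2 hR) hR,
    lintegral_union measurableSet_Ico (Ico_disjoint_Ico.2 (by simp)), h_neg,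
    setLIntegral_congr (Ico_ae_eq_Ioc (a := (0 : ℝ))), h_pos, two_mul]

lemma setLIntegral_Icc_abs_sub_rpow {s : ℝ} (hs : -1 < s) (a : ℝ) {R : ℝ} (hR : 0 ≤ R) :
    ∫⁻ x in Icc (a - R) (a + R), ENNReal.ofReal (|x - a| ^ s)
      = ENNReal.ofReal (2 * (R ^ (s + 1) / (s + 1))) := by
  have h_translate : ∫⁻ x in Icc (a - R) (a + R), ENNReal.ofReal (|x - a| ^ s)
      = ∫⁻ x in Icc (-R) R, ENNReal.ofReal (|x| ^ s) := by
    rw [← (measurePreserving_sub_right volume a).setLIntegral_comp_preimage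
      measurableSet_Icc (f := fun x ↦ ENNReal.ofReal (|x| ^ s)) (by fun_prop),
      preimage_sub_const_Icc, neg_add_eq_sub, add_comm R a]
  have h_half : ∫⁻ x in Ioc 0 R, ENNReal.ofReal (x ^ s)
      = ENNReal.ofReal (R ^ (s + 1) / (s + 1)) := by
    have h_int := intervalIntegral.intervalIntegrable_rpow' hs (a := 0) (b := R)
    rw [← ofReal_integral_eq_lintegral_ofReal
      ((intervalIntegrable_iff_integrableOn_Ioc_of_le hR).1 h_int)
      (ae_restrict_of_forall_mem measurableSet_Ioc fun x hx ↦ Real.rpow_nonneg hx.1.le s),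
      ← intervalIntegral.integral_of_le hR, integral_rpow (Or.inl hs),
      Real.zero_rpow (by linarith), sub_zero]
  rw [h_translate, setLIntegral_Icc_neg_comp_abs (g := fun x ↦ ENNReal.ofReal (x ^ s))
    (by fun_prop) hR, h_half, ENNReal.ofReal_mul zero_le_two, ENNReal.ofReal_ofNat]

section CarlesonBox

variable {φ φ' s s' r : ℝ} {w ζ : ℂ}

lemma abs_arg_circleMap_le (hr : 0 ≤ r) (φ : ℝ) : |arg (circleMap 0 r φ)| ≤ |φ| := by
  rcases hr.eq_or_lt with rfl | hr
  · simp
  rcases le_or_gt |φ| π with hφ | hφ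
  · refine (Real.injOn_cos ⟨abs_nonneg _, abs_arg_le_pi _⟩ ⟨abs_nonneg _, hφ⟩ ?_).le
    rw [Real.cos_abs, Real.cos_abs, cos_arg (circleMap_ne_center hr.ne'), circleMap_zero_re,
      norm_circleMap_zero, abs_of_pos hr, mul_div_cancel_left₀ _ hr.ne']
  · exact (abs_arg_le_pi _).trans hφ.le

lemma abs_arg_le_of_norm_one_sub_le (hs : s ≤ 1 / 2) (hw : ‖1 - w‖ ≤ s) : |arg w| ≤ π * s := by
  have h_re : |1 - w.re| ≤ s := (abs_re_le_norm (1 - w)).trans hw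
  have h_im : |w.im| ≤ s := by simpa using (abs_im_le_norm (1 - w)).trans hw
  have h_re_ge : 1 / 2 ≤ w.re := by linarith [(abs_le.1 h_re).2]
  have h_norm : 1 / 2 ≤ ‖w‖ := h_re_ge.trans (re_le_norm w)
  have h_sin : |Real.sin (arg w)| ≤ 2 * s := by
    rw [sin_arg, abs_div, abs_norm, div_le_iff₀ (by linarith)]
    nlinarith [abs_nonneg w.im]
  have h_jordan := (Real.mul_abs_le_abs_sin
    (abs_arg_le_pi_div_two_iff.2 (by linarith))).trans h_sin
  rw [div_mul_eq_mul_div, div_le_iff₀ Real.pi_pos] at h_jordan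
  linarith

lemma circleMap_norm_add_arg_mul (φ : ℝ) (ζ : ℂ) :
    circleMap 0 ‖ζ‖ (φ + arg (ζ * circleMap 0 1 (-φ))) = ζ := by
  have h_polar : circleMap 0 ‖ζ‖ (arg (ζ * circleMap 0 1 (-φ))) = ζ * circleMap 0 1 (-φ) := by
    have h := norm_mul_exp_arg_mul_I (ζ * circleMap 0 1 (-φ))
    rwa [norm_mul, norm_circleMap_zero, abs_one, mul_one, ← circleMap_zero] at h
  calc circleMap 0 ‖ζ‖ (φ + arg (ζ * circleMap 0 1 (-φ)))
      = circleMap 0 1 φ * circleMap 0 ‖ζ‖ (arg (ζ * circleMap 0 1 (-φ))) := by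
        rw [circleMap_zero_mul, one_mul]
    _ = ζ * (circleMap 0 1 φ * circleMap 0 1 (-φ)) := by rw [h_polar, mul_left_comm]
    _ = ζ := by rw [circleMap_zero_mul]; simp [circleMap_zero]

lemma mem_carlesonBox_iff :
    ζ ∈ carlesonBox φ s ↔
      ‖ζ‖ ≤ 1 ∧ 1 - s ≤ ‖ζ‖ ∧ |arg (ζ * circleMap 0 1 (-φ))| ≤ π * s := by
  refine and_congr_right fun _ ↦ and_congr_right fun _ ↦ ⟨?_, fun h ↦ ?_⟩
  · rintro ⟨θ, hθ, h_polar⟩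
    rw [h_polar, ← circleMap_zero, circleMap_zero_mul, mul_one, ← sub_eq_add_neg]
    exact (abs_arg_circleMap_le (norm_nonneg ζ) _).trans hθ
  · refine ⟨φ + arg (ζ * circleMap 0 1 (-φ)), by rwa [add_sub_cancel_left], ?_⟩
    rw [← circleMap_zero, circleMap_norm_add_arg_mul]

lemma measurableSet_carlesonBox_prod (s : ℝ) :
    MeasurableSet {q : ℝ × ℂ | q.2 ∈ carlesonBox q.1 s} := by
  have h_arg : Measurable fun q : ℝ × ℂ ↦ |arg (q.2 * circleMap 0 1 (-q.1))| :=
    (measurable_arg.comp (measurable_snd.mul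
      ((measurable_circleMap 0 1).comp measurable_fst.neg))).abs
  simp only [mem_carlesonBox_iff]
  exact (measurableSet_le measurable_snd.norm measurable_const).inter
    ((measurableSet_le measurable_const measurable_snd.norm).inter
      (measurableSet_le h_arg measurable_const))

lemma measurableSet_carlesonBox (φ s : ℝ) : MeasurableSet (carlesonBox φ s) :=
  (measurableSet_carlesonBox_prod s).preimage measurable_prodMk_left

lemma measurable_measure_carlesonBox (m : Measure ℂ) [SFinite m] (s : ℝ) :
    Measurable fun φ ↦ m (carlesonBox φ s) :=
  measurable_measure_prodMk_left (measurableSet_carlesonBox_prod s)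

lemma carlesonBox_subset_carlesonBox (h : |φ - φ'| ≤ π * (s' - s)) :
    carlesonBox φ s ⊆ carlesonBox φ' s' := by
  rintro ζ ⟨h_le, h_ge, θ, hθ, h_polar⟩
  have hs : s ≤ s' := by nlinarith [abs_nonneg (φ - φ'), Real.pi_pos]
  exact ⟨h_le, by linarith, θ, by linarith [abs_sub_le θ φ φ'], h_polar⟩

lemma mem_carlesonBox_of_one_le (hs : 1 ≤ s) (hζ : ‖ζ‖ ≤ 1) : ζ ∈ carlesonBox φ s :=
  mem_carlesonBox_iff.2 ⟨hζ, by linarith [norm_nonneg ζ],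
    (abs_arg_le_pi _).trans (le_mul_of_one_le_right Real.pi_pos.le hs)⟩

lemma norm_circleMap_one_sub {δ : ℝ} (hδ : δ ≤ 1) (φ : ℝ) : ‖circleMap 0 (1 - δ) φ‖ = 1 - δ := by
  rw [norm_circleMap_zero, abs_of_nonneg (by linarith)]

lemma norm_one_sub_circleMap_mul_conj (r φ : ℝ) (ζ : ℂ) :
    ‖1 - circleMap 0 r φ * conj ζ‖ = ‖1 - r * (ζ * circleMap 0 1 (-φ))‖ := by
  have h_rot : circleMap 0 r (-φ) = r * circleMap 0 1 (-φ) := by simp [circleMap_zero]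
  rw [← norm_conj, map_sub, map_one, map_mul, conj_conj, conj_circleMap_zero, h_rot]
  ring_nf

lemma mem_carlesonBox_of_norm_one_sub_mul_conj_le (hr₀ : 0 < r) (hr₁ : r ≤ 1) (hζ : ‖ζ‖ ≤ 1)
    (h : ‖1 - circleMap 0 r φ * conj ζ‖ ≤ s) : ζ ∈ carlesonBox φ (2 * s) := by
  rcases le_or_gt s (1 / 2) with hs | hs
  · have hs₀ : 0 ≤ s := (norm_nonneg _).trans h
    have h_norm : 1 - r * ‖ζ‖ ≤ s := by
      have := (norm_sub_norm_le 1 (circleMap 0 r φ * conj ζ)).trans h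
      rwa [norm_one, norm_mul, norm_circleMap_zero, abs_of_pos hr₀, norm_conj] at this
    rw [norm_one_sub_circleMap_mul_conj] at h
    have h_arg := abs_arg_le_of_norm_one_sub_le hs h
    rw [arg_real_mul _ hr₀] at h_arg
    exact mem_carlesonBox_iff.2 ⟨hζ, by nlinarith [norm_nonneg ζ], by nlinarith [Real.pi_pos]⟩
  · exact mem_carlesonBox_of_one_le (by linarith) hζ

lemma norm_one_sub_mul_conj_le_of_mem_carlesonBox {δ : ℝ} (hδ₀ : 0 ≤ δ) (hδ₁ : δ ≤ 1)
    (hζ : ζ ∈ carlesonBox φ δ) : ‖1 - circleMap 0 (1 - δ) φ * conj ζ‖ ≤ 6 * δ := by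
  obtain ⟨h_le, h_ge, θ, hθ, h_polar⟩ := hζ
  set R := (1 - δ) * ‖ζ‖
  have hR₀ : 0 ≤ R := mul_nonneg (by linarith) (norm_nonneg ζ)
  have hR₁ : R ≤ 1 := by nlinarith [norm_nonneg ζ]
  have h_prod : circleMap 0 (1 - δ) φ * conj ζ = circleMap 0 R (φ - θ) := by
    rw [h_polar, ← circleMap_zero, conj_circleMap_zero, circleMap_zero_mul, sub_eq_add_neg φ]
  have h_chord : ‖circleMap 0 R 0 - circleMap 0 R (φ - θ)‖ ≤ R * |θ - φ| := by
    have := (lipschitzWith_circleMap 0 R).dist_le_mul 0 (φ - θ)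
    simpa [dist_eq_norm, abs_of_nonneg hR₀] using this
  have h_one : ‖1 - circleMap 0 R 0‖ = 1 - R := by
    rw [circleMap_zero, ofReal_zero, zero_mul, Complex.exp_zero, mul_one, ← ofReal_one,
      ← ofReal_sub, norm_real, Real.norm_of_nonneg (by linarith)]
  rw [h_prod]
  calc ‖1 - circleMap 0 R (φ - θ)‖
      ≤ ‖1 - circleMap 0 R 0‖ + ‖circleMap 0 R 0 - circleMap 0 R (φ - θ)‖ :=
        norm_sub_le_norm_sub_add_norm_sub _ _ _
    _ ≤ (1 - R) + 1 * (π * δ) := by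
        rw [h_one]
        gcongr
        exact h_chord.trans (by gcongr)
    _ ≤ 6 * δ := by nlinarith [Real.pi_lt_four]

end CarlesonBox

section Kernels

/-- The pseudo-hyperbolic distance of two points of the unit disc. -/
noncomputable def pseudoHypDist (z ζ : ℂ) : ℝ := ‖z - ζ‖ / ‖1 - z * conj ζ‖

/-- The Green function of the unit disc. On the diagonal the logarithm takes its junk value `0`
instead of `-∞`. -/
noncomputable def greenFun (z ζ : ℂ) : ℝ := -Real.log (pseudoHypDist z ζ)

/-- The Poisson kernel of the unit disc, extended from `‖ζ‖ = 1` to the closed disc by writing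
its denominator as `‖1 - z * conj ζ‖ ^ 2`. -/
noncomputable def extPoisson (z ζ : ℂ) : ℝ := (1 - ‖z‖ ^ 2) / ‖1 - z * conj ζ‖ ^ 2

section Measurability

variable {α : Type*} [MeasurableSpace α] {f g : α → ℂ}

@[fun_prop]
lemma measurable_pseudoHypDist (hf : Measurable f) (hg : Measurable g) :
    Measurable fun x ↦ pseudoHypDist (f x) (g x) := by
  unfold pseudoHypDist
  fun_prop

@[fun_prop]
lemma measurable_greenFun (hf : Measurable f) (hg : Measurable g) :
    Measurable fun x ↦ greenFun (f x) (g x) := by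
  unfold greenFun
  fun_prop

@[fun_prop]
lemma measurable_extPoisson (hf : Measurable f) (hg : Measurable g) :
    Measurable fun x ↦ extPoisson (f x) (g x) := by
  unfold extPoisson
  fun_prop

end Measurability

variable {z ζ : ℂ}

lemma one_sub_norm_mul_norm_le (z ζ : ℂ) : 1 - ‖z‖ * ‖ζ‖ ≤ ‖1 - z * conj ζ‖ := by
  simpa using norm_sub_norm_le 1 (z * conj ζ)

lemma one_sub_norm_left_le (hζ : ‖ζ‖ ≤ 1) : 1 - ‖z‖ ≤ ‖1 - z * conj ζ‖ :=
  (one_sub_norm_mul_norm_le z ζ).trans' (by nlinarith [norm_nonneg z])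

lemma one_sub_norm_right_le (hz : ‖z‖ ≤ 1) : 1 - ‖ζ‖ ≤ ‖1 - z * conj ζ‖ :=
  (one_sub_norm_mul_norm_le z ζ).trans' (by nlinarith [norm_nonneg ζ])

lemma norm_one_sub_mul_conj_pos (hz : ‖z‖ < 1) (hζ : ‖ζ‖ ≤ 1) : 0 < ‖1 - z * conj ζ‖ :=
  (sub_pos.2 hz).trans_le (one_sub_norm_left_le hζ)

lemma norm_one_sub_mul_conj_sq_sub (z ζ : ℂ) :
    ‖1 - z * conj ζ‖ ^ 2 - ‖z - ζ‖ ^ 2 = (1 - ‖z‖ ^ 2) * (1 - ‖ζ‖ ^ 2) := by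
  simp only [← normSq_eq_norm_sq, normSq_apply, sub_re, sub_im, mul_re, mul_im, conj_re, conj_im,
    one_re, one_im]
  ring

lemma extPoisson_nonneg (hz : ‖z‖ ≤ 1) : 0 ≤ extPoisson z ζ :=
  div_nonneg (by nlinarith [norm_nonneg z]) (sq_nonneg _)

lemma one_sub_pseudoHypDist_sq (hz : ‖z‖ < 1) (hζ : ‖ζ‖ ≤ 1) :
    1 - pseudoHypDist z ζ ^ 2 = (1 - ‖ζ‖ ^ 2) * extPoisson z ζ := by
  have h_pos := norm_one_sub_mul_conj_pos hz hζ
  rw [pseudoHypDist, extPoisson, div_pow, one_sub_div (by positivity),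
    norm_one_sub_mul_conj_sq_sub, mul_comm, mul_div_assoc]

lemma pseudoHypDist_nonneg (z ζ : ℂ) : 0 ≤ pseudoHypDist z ζ := by
  unfold pseudoHypDist
  positivity

lemma pseudoHypDist_pos (hz : ‖z‖ < 1) (hζ : ‖ζ‖ ≤ 1) (hne : z ≠ ζ) : 0 < pseudoHypDist z ζ :=
  div_pos (norm_sub_pos_iff.2 hne) (norm_one_sub_mul_conj_pos hz hζ)

lemma pseudoHypDist_le_one (hz : ‖z‖ < 1) (hζ : ‖ζ‖ ≤ 1) : pseudoHypDist z ζ ≤ 1 := by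
  have h := one_sub_pseudoHypDist_sq hz hζ
  have h_prod : 0 ≤ (1 - ‖ζ‖ ^ 2) * extPoisson z ζ :=
    mul_nonneg (by nlinarith [norm_nonneg ζ]) (extPoisson_nonneg hz.le)
  nlinarith [pseudoHypDist_nonneg z ζ]

lemma greenFun_nonneg (hz : ‖z‖ < 1) (hζ : ‖ζ‖ ≤ 1) : 0 ≤ greenFun z ζ :=
  neg_nonneg.2 (Real.log_nonpos (pseudoHypDist_nonneg z ζ) (pseudoHypDist_le_one hz hζ))

lemma one_sub_norm_mul_extPoisson_le_greenFun (hz : ‖z‖ < 1) (hζ : ‖ζ‖ ≤ 1) (hne : z ≠ ζ) :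
    (1 - ‖ζ‖) * extPoisson z ζ ≤ 2 * greenFun z ζ :=
  calc (1 - ‖ζ‖) * extPoisson z ζ
      ≤ (1 - ‖ζ‖ ^ 2) * extPoisson z ζ := by
        gcongr
        · exact extPoisson_nonneg hz.le
        · nlinarith [norm_nonneg ζ]
    _ = 1 - pseudoHypDist z ζ ^ 2 := (one_sub_pseudoHypDist_sq hz hζ).symm
    _ ≤ -Real.log (pseudoHypDist z ζ ^ 2) := by
        linarith [Real.log_le_sub_one_of_pos (pow_pos (pseudoHypDist_pos hz hζ hne) 2)]
    _ = 2 * greenFun z ζ := by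
        rw [Real.log_pow, greenFun]
        push_cast
        ring

lemma greenFun_le_of_half_le_pseudoHypDist (hz : ‖z‖ < 1) (hζ : ‖ζ‖ ≤ 1)
    (hρ : 1 / 2 ≤ pseudoHypDist z ζ) : greenFun z ζ ≤ 4 * ((1 - ‖ζ‖) * extPoisson z ζ) := by
  set ρ := pseudoHypDist z ζ
  have h_sq : 1 - ρ ^ 2 ≤ 2 * ((1 - ‖ζ‖) * extPoisson z ζ) := by
    rw [one_sub_pseudoHypDist_sq hz hζ, ← mul_assoc]
    gcongr
    · exact extPoisson_nonneg hz.le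
    · nlinarith [norm_nonneg ζ]
  have h_log : 1 - (ρ ^ 2)⁻¹ ≤ 2 * Real.log ρ := by
    simpa using Real.one_sub_inv_le_log_of_pos (show 0 < ρ ^ 2 by positivity)
  have h_inv : (ρ ^ 2)⁻¹ - 1 ≤ 4 * (1 - ρ ^ 2) := by
    rw [inv_eq_one_div, div_sub_one (by positivity), div_le_iff₀ (by positivity)]
    have h_one : ρ ≤ 1 := pseudoHypDist_le_one hz hζ
    nlinarith [mul_nonneg (sub_nonneg.2 h_one) (sub_nonneg.2 hρ)]
  rw [greenFun]
  linarith

lemma norm_one_sub_mul_conj_le_of_pseudoHypDist_lt_half (hz : ‖z‖ < 1) (hζ : ‖ζ‖ < 1)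
    (hρ : pseudoHypDist z ζ < 1 / 2) :
    ‖1 - z * conj ζ‖ ≤ 16 / 3 * (1 - ‖z‖) ∧ ‖1 - z * conj ζ‖ ≤ 16 / 3 * (1 - ‖ζ‖) := by
  have h_pos := norm_one_sub_mul_conj_pos hz hζ.le
  have h_left := one_sub_norm_left_le (z := z) hζ.le
  have h_right := one_sub_norm_right_le (ζ := ζ) hz.le
  have h_identity := norm_one_sub_mul_conj_sq_sub z ζ
  rw [pseudoHypDist, div_lt_iff₀ h_pos] at hρ
  set d := ‖1 - z * conj ζ‖
  have h_factors : (1 - ‖z‖ ^ 2) * (1 - ‖ζ‖ ^ 2) ≤ (2 * (1 - ‖z‖)) * (2 * (1 - ‖ζ‖)) := by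
    gcongr <;> nlinarith [norm_nonneg z, norm_nonneg ζ]
  have h_sq : 3 / 4 * d ^ 2 ≤ 4 * ((1 - ‖z‖) * (1 - ‖ζ‖)) := by nlinarith [norm_nonneg (z - ζ)]
  constructor
  · refine le_of_mul_le_mul_right (?_ : d * d ≤ _ * d) h_pos
    nlinarith
  · refine le_of_mul_le_mul_right (?_ : d * d ≤ _ * d) h_pos
    nlinarith

lemma extPoisson_circleMap_le_of_le {δ φ : ℝ} (hδ₀ : 0 < δ) (hδ₁ : δ ≤ 1) {k : ℕ}
    (h : 2 ^ k * δ ≤ ‖1 - circleMap 0 (1 - δ) φ * conj ζ‖) :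
    extPoisson (circleMap 0 (1 - δ) φ) ζ ≤ 2 / δ * (1 / 4) ^ k := by
  rw [extPoisson, norm_circleMap_one_sub hδ₁]
  calc (1 - (1 - δ) ^ 2) / ‖1 - circleMap 0 (1 - δ) φ * conj ζ‖ ^ 2
      ≤ (2 * δ) / (2 ^ k * δ) ^ 2 := by
        gcongr
        nlinarith
    _ = 2 / δ * (1 / 4) ^ k := by
        have h_pow : (1 / 4 : ℝ) ^ k * (2 ^ k) ^ 2 = 1 := by
          rw [← pow_mul, mul_comm k 2, pow_mul, ← mul_pow]
          norm_num
        field_simp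
        linarith

lemma extPoisson_le_sum_indicator_carlesonBox {δ φ : ℝ} (hδ₀ : 0 < δ) (hδ₁ : δ < 1)
    {n : ℕ} (hn : 2 < 2 ^ n * δ) (hζ : ‖ζ‖ ≤ 1) :
    ENNReal.ofReal (extPoisson (circleMap 0 (1 - δ) φ) ζ) ≤
      ∑ k ∈ Finset.range n, ENNReal.ofReal (2 / δ * (1 / 4) ^ k) *
        (carlesonBox φ (4 * (2 ^ k * δ))).indicator 1 ζ := by
  have h_norm := norm_circleMap_one_sub hδ₁.le φ
  have h_ge : δ ≤ ‖1 - circleMap 0 (1 - δ) φ * conj ζ‖ := by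
    simpa [h_norm] using one_sub_norm_left_le (z := circleMap 0 (1 - δ) φ) hζ
  have h_le : ‖1 - circleMap 0 (1 - δ) φ * conj ζ‖ ≤ 2 :=
    (norm_sub_le _ _).trans <| by
      rw [norm_one, norm_mul, norm_conj, h_norm]
      nlinarith [norm_nonneg ζ]
  obtain ⟨k, hk_le, hk_lt⟩ := exists_nat_pow_near ((one_le_div hδ₀).2 h_ge) one_lt_two
  rw [le_div_iff₀ hδ₀] at hk_le
  rw [div_lt_iff₀ hδ₀] at hk_lt
  have hkn : k ∈ Finset.range n := by
    refine Finset.mem_range.2 ((pow_lt_pow_iff_right₀ one_lt_two).1 (?_ : (2 : ℝ) ^ k < 2 ^ n))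
    exact lt_of_mul_lt_mul_right (by linarith) hδ₀.le
  have h_mem : ζ ∈ carlesonBox φ (4 * (2 ^ k * δ)) := by
    have := mem_carlesonBox_of_norm_one_sub_mul_conj_le (by linarith) (by linarith) hζ hk_lt.le
    rwa [pow_succ, show 2 * (2 ^ k * 2 * δ) = 4 * (2 ^ k * δ) by ring] at this
  refine le_trans ?_ (Finset.single_le_sum (fun _ _ ↦ zero_le) hkn)
  rw [indicator_of_mem h_mem, Pi.one_apply, mul_one]
  exact ENNReal.ofReal_le_ofReal (extPoisson_circleMap_le_of_le hδ₀ hδ₁.le hk_le)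

end Kernels

section CompleteMeasure

/-- The complete measure of a function with Riesz measure `μ` on the unit disc and boundary
measure `ψ`, the latter being given on the angles of the boundary points. -/
noncomputable def completeMeasure (μ : Measure ℂ) (ψ : Measure ℝ) : Measure ℂ :=
  (μ.restrict (ball 0 1)).withDensity (fun ζ ↦ ENNReal.ofReal (1 - ‖ζ‖))
    + ψ.map (circleMap 0 1)

/-- The `L^p` norm over the angles `φ ∈ (0, 2π]` of the mass of the Carleson box `C(φ, s)`. -/
noncomputable def carlesonNorm (m : Measure ℂ) (p s : ℝ) : ℝ≥0∞ :=
  eLpNorm' (fun φ ↦ m (carlesonBox φ s)) p (volume.restrict (Ioc 0 (2 * π)))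

variable {μ : Measure ℂ} {ψ : Measure ℝ}

lemma ae_restrict_ball_norm_lt_one (μ : Measure ℂ) :
    ∀ᵐ ζ ∂μ.restrict (ball 0 1), ‖ζ‖ < 1 :=
  ae_restrict_of_forall_mem isOpen_ball.measurableSet fun _ ↦ mem_ball_zero_iff.1

lemma isFiniteMeasure_completeMeasure [IsFiniteMeasure ψ]
    (hμ : ∫⁻ ζ in ball (0 : ℂ) 1, ENNReal.ofReal (1 - ‖ζ‖) ∂μ ≠ ∞) :
    IsFiniteMeasure (completeMeasure μ ψ) := by
  have := isFiniteMeasure_withDensity hμ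
  unfold completeMeasure
  infer_instance

lemma sFinite_restrict_ball (hμ : ∫⁻ ζ in ball (0 : ℂ) 1, ENNReal.ofReal (1 - ‖ζ‖) ∂μ ≠ ∞) :
    SFinite (μ.restrict (ball 0 1)) := by
  have h_finite := isFiniteMeasure_withDensity hμ
  rw [← withDensity_inv_same (μ := μ.restrict (ball 0 1))
    (f := fun ζ ↦ ENNReal.ofReal (1 - ‖ζ‖)) (by fun_prop) ?_ (by simp)]
  · infer_instance
  · filter_upwards [ae_restrict_ball_norm_lt_one μ] with ζ hζ
    simpa using hζ

lemma lintegral_completeMeasure {g : ℂ → ℝ≥0∞} (hg : Measurable g) :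
    ∫⁻ ζ, g ζ ∂completeMeasure μ ψ =
      (∫⁻ ζ in ball 0 1, ENNReal.ofReal (1 - ‖ζ‖) * g ζ ∂μ) + ∫⁻ t, g (circleMap 0 1 t) ∂ψ := by
  rw [completeMeasure, lintegral_add_measure,
    lintegral_withDensity_eq_lintegral_mul _ (by fun_prop) hg,
    lintegral_map hg (measurable_circleMap 0 1)]
  rfl

lemma ae_completeMeasure_norm_le_one (μ : Measure ℂ) (ψ : Measure ℝ) :
    ∀ᵐ ζ ∂completeMeasure μ ψ, ‖ζ‖ ≤ 1 := by
  refine ae_add_measure_iff.2 ⟨(withDensity_absolutelyContinuous _ _).ae_le ?_, ?_⟩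
  · filter_upwards [ae_restrict_ball_norm_lt_one μ] with ζ hζ using hζ.le
  · rw [ae_map_iff (measurable_circleMap 0 1).aemeasurable
      (measurableSet_le measurable_norm measurable_const)]
    simp

lemma ofReal_mul_restrict_ball_le_completeMeasure (ψ : Measure ℝ) {t : ℝ} {s : Set ℂ}
    (hs : MeasurableSet s) (ht : ∀ ζ ∈ s, t ≤ 1 - ‖ζ‖) :
    ENNReal.ofReal t * μ.restrict (ball 0 1) s ≤ completeMeasure μ ψ s :=
  calc ENNReal.ofReal t * μ.restrict (ball 0 1) s
      = ∫⁻ _ in s, ENNReal.ofReal t ∂μ.restrict (ball 0 1) := (setLIntegral_const _ _).symm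
    _ ≤ ∫⁻ ζ in s, ENNReal.ofReal (1 - ‖ζ‖) ∂μ.restrict (ball 0 1) :=
        setLIntegral_mono' hs fun ζ hζ ↦ ENNReal.ofReal_le_ofReal (ht ζ hζ)
    _ = (μ.restrict (ball 0 1)).withDensity (fun ζ ↦ ENNReal.ofReal (1 - ‖ζ‖)) s :=
        (withDensity_apply _ hs).symm
    _ ≤ completeMeasure μ ψ s := Measure.le_add_right le_rfl s

end CompleteMeasure

section NearPart

/-- The Green function cut off to a pseudo-hyperbolic neighbourhood of its pole, where the
Poisson kernel does not control it. -/
noncomputable def nearGreen (z ζ : ℂ) : ℝ≥0∞ :=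
  if pseudoHypDist z ζ < 1 / 2 then ENNReal.ofReal (greenFun z ζ) else 0

@[fun_prop]
lemma measurable_nearGreen {α : Type*} [MeasurableSpace α] {f g : α → ℂ} (hf : Measurable f)
    (hg : Measurable g) : Measurable fun x ↦ nearGreen (f x) (g x) :=
  .ite (measurableSet_lt (by fun_prop) measurable_const) (by fun_prop) measurable_const

lemma abs_sub_le_pi_mul_norm_circleMap_sub {r φ α : ℝ} (hr : 1 / 2 ≤ r) (hφ : |φ - α| ≤ π / 2)
    (R : ℝ) : |φ - α| ≤ π * ‖circleMap 0 r φ - circleMap 0 R α‖ := by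
  have h_rotate : ‖circleMap 0 r φ - circleMap 0 R α‖ = ‖circleMap 0 r (φ - α) - R‖ := by
    rw [← mul_one ‖circleMap 0 r φ - _‖, ← abs_one, ← norm_circleMap_zero 1 (-α), ← norm_mul,
      sub_mul, circleMap_zero_mul, circleMap_zero_mul, mul_one, mul_one, ← sub_eq_add_neg,
      add_neg_cancel]
    simp [circleMap_zero]
  have h_im : r * |Real.sin (φ - α)| ≤ ‖circleMap 0 r (φ - α) - R‖ := by
    refine le_trans (le_of_eq ?_) (abs_im_le_norm _)
    rw [sub_im, ofReal_im, sub_zero, circleMap_zero_im, abs_mul,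
      abs_of_nonneg (by linarith : (0 : ℝ) ≤ r)]
  have h_jordan := Real.mul_abs_le_abs_sin hφ
  rw [h_rotate]
  calc |φ - α| = π * (1 / 2 * (2 / π * |φ - α|)) := by field_simp
    _ ≤ π * (r * |Real.sin (φ - α)|) := by gcongr
    _ ≤ π * ‖circleMap 0 r (φ - α) - R‖ := by gcongr

lemma greenFun_rpow_le {p : ℝ} (hp : 0 < p) {z ζ : ℂ} (hz : ‖z‖ < 1) (hζ : ‖ζ‖ ≤ 1) :
    greenFun z ζ ^ p ≤ (2 * p) ^ p * pseudoHypDist z ζ ^ (-(1 / 2) : ℝ) := by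
  have h_green := greenFun_nonneg hz hζ
  have h_dist := pseudoHypDist_nonneg z ζ
  rw [greenFun, ← Real.log_inv] at h_green ⊢
  calc Real.log (pseudoHypDist z ζ)⁻¹ ^ p
      ≤ ((pseudoHypDist z ζ)⁻¹ ^ (1 / (2 * p)) / (1 / (2 * p))) ^ p := by
        gcongr
        exact Real.log_le_rpow_div (by positivity) (by positivity)
    _ = (2 * p) ^ p * pseudoHypDist z ζ ^ (-(1 / 2) : ℝ) := by
        rw [div_div_eq_mul_div, div_one, Real.mul_rpow (by positivity) (by positivity),
          ← Real.rpow_mul (by positivity), mul_comm, Real.rpow_neg h_dist,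
          Real.inv_rpow h_dist]
        rw [one_div_mul_eq_div, div_mul_cancel_right₀ hp.ne', one_div]

variable {p δ φ : ℝ} {ζ : ℂ}

lemma mem_of_pseudoHypDist_circleMap_lt_half (hδ₀ : 0 < δ) (hδ₁ : δ < 1) (hζ : ‖ζ‖ < 1)
    (hρ : pseudoHypDist (circleMap 0 (1 - δ) φ) ζ < 1 / 2) :
    ‖1 - circleMap 0 (1 - δ) φ * conj ζ‖ ≤ 16 / 3 * δ ∧ 3 / 16 * δ ≤ 1 - ‖ζ‖ ∧
      ζ ∈ carlesonBox φ (11 * δ) := by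
  have h_norm := norm_circleMap_one_sub hδ₁.le φ
  have h_ge := one_sub_norm_left_le (z := circleMap 0 (1 - δ) φ) hζ.le
  obtain ⟨h_left, h_right⟩ :=
    norm_one_sub_mul_conj_le_of_pseudoHypDist_lt_half (by linarith) hζ hρ
  rw [h_norm, sub_sub_cancel] at h_ge h_left
  refine ⟨h_left, by linarith, ?_⟩
  refine carlesonBox_subset_carlesonBox (s := 2 * (16 / 3 * δ)) ?_
    (mem_carlesonBox_of_norm_one_sub_mul_conj_le (by linarith) (by linarith) hζ.le h_left)
  rw [sub_self, abs_zero]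
  nlinarith [Real.pi_pos]

lemma mem_of_nearGreen_circleMap_ne_zero (hδ₀ : 0 < δ) (hδ₁ : δ < 1) (hζ : ‖ζ‖ < 1)
    (h : nearGreen (circleMap 0 (1 - δ) φ) ζ ≠ 0) :
    3 / 16 * δ ≤ 1 - ‖ζ‖ ∧ ζ ∈ carlesonBox φ (11 * δ) :=
  (mem_of_pseudoHypDist_circleMap_lt_half hδ₀ hδ₁ hζ (by_contra fun hρ ↦ h (if_neg hρ))).2

lemma nearGreen_circleMap_rpow_le (hp : 0 < p) (hδ₀ : 0 < δ) (hδ₁ : δ ≤ 1 / 2) {R α : ℝ}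
    (hR : ‖circleMap 0 R α‖ < 1) (hne : φ ≠ α) (hφ : |φ - α| ≤ π / 2) :
    nearGreen (circleMap 0 (1 - δ) φ) (circleMap 0 R α) ^ p ≤
      ENNReal.ofReal ((2 * p) ^ p * (6 * π * δ) ^ (1 / 2 : ℝ)) *
        ENNReal.ofReal (|φ - α| ^ (-(1 / 2) : ℝ)) := by
  set ζ := circleMap 0 R α
  set z := circleMap 0 (1 - δ) φ
  have hz : ‖z‖ < 1 := by
    rw [norm_circleMap_one_sub (by linarith)]
    linarith
  rcases lt_or_ge (pseudoHypDist z ζ) (1 / 2) with hρ | hρ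
  · have h_abs : 0 < |φ - α| := abs_pos.2 (sub_ne_zero.2 hne)
    have h_dist : |φ - α| / (6 * π * δ) ≤ pseudoHypDist z ζ := by
      have h_chord := abs_sub_le_pi_mul_norm_circleMap_sub (r := 1 - δ) (by linarith) hφ R
      have h_denom := (mem_of_pseudoHypDist_circleMap_lt_half hδ₀ (by linarith) hR hρ).1
      calc |φ - α| / (6 * π * δ) ≤ π * ‖z - ζ‖ / (6 * π * δ) := by gcongr
        _ = ‖z - ζ‖ / (6 * δ) := by field_simp
        _ ≤ pseudoHypDist z ζ :=
          div_le_div_of_nonneg_left (norm_nonneg _) (norm_one_sub_mul_conj_pos hz hR.le)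
            (by linarith)
    rw [nearGreen, if_pos hρ, ENNReal.ofReal_rpow_of_nonneg (greenFun_nonneg hz hR.le) hp.le,
      ← ENNReal.ofReal_mul (by positivity)]
    refine ENNReal.ofReal_le_ofReal ?_
    calc greenFun z ζ ^ p ≤ (2 * p) ^ p * pseudoHypDist z ζ ^ (-(1 / 2) : ℝ) :=
          greenFun_rpow_le hp hz hR.le
      _ ≤ (2 * p) ^ p * (|φ - α| / (6 * π * δ)) ^ (-(1 / 2) : ℝ) := by
          gcongr (2 * p) ^ p * ?_
          exact Real.rpow_le_rpow_of_nonpos (by positivity) h_dist (by norm_num)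
      _ = (2 * p) ^ p * (6 * π * δ) ^ (1 / 2 : ℝ) * |φ - α| ^ (-(1 / 2) : ℝ) := by
          rw [Real.div_rpow h_abs.le (by positivity),
            Real.rpow_neg (x := 6 * π * δ) (by positivity), div_inv_eq_mul]
          ring
  · rw [nearGreen, if_neg hρ.not_gt, ENNReal.zero_rpow_of_pos hp]
    exact zero_le

lemma setLIntegral_Icc_nearGreen_circleMap_rpow_le (hp : 1 ≤ p) (hδ₀ : 0 < δ) (hδ₁ : δ ≤ 1 / 30)
    {R α : ℝ} (hR : ‖circleMap 0 R α‖ < 1) :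
    ∫⁻ φ in Icc (α - 13 * π * δ) (α + 13 * π * δ),
        nearGreen (circleMap 0 (1 - δ) φ) (circleMap 0 R α) ^ p ≤
      ENNReal.ofReal ((400 * p) ^ p * δ) :=
  calc ∫⁻ φ in Icc (α - 13 * π * δ) (α + 13 * π * δ),
          nearGreen (circleMap 0 (1 - δ) φ) (circleMap 0 R α) ^ p
      ≤ ∫⁻ φ in Icc (α - 13 * π * δ) (α + 13 * π * δ),
          ENNReal.ofReal ((2 * p) ^ p * (6 * π * δ) ^ (1 / 2 : ℝ)) *
            ENNReal.ofReal (|φ - α| ^ (-(1 / 2) : ℝ)) := by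
        refine lintegral_mono_ae ?_
        filter_upwards [ae_restrict_mem measurableSet_Icc,
          ae_restrict_of_ae (Measure.ae_ne volume α)] with φ hφ hne
        refine nearGreen_circleMap_rpow_le (by linarith) hδ₀ (by linarith) hR hne ?_
        rw [abs_le]
        constructor <;> nlinarith [hφ.1, hφ.2, Real.pi_pos]
    _ = ENNReal.ofReal ((2 * p) ^ p * (4 * (6 * π * δ * (13 * π * δ)) ^ (1 / 2 : ℝ))) := by
        rw [lintegral_const_mul _ (by fun_prop),
          setLIntegral_Icc_abs_sub_rpow (by norm_num) α (by positivity),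
          ← ENNReal.ofReal_mul (by positivity),
          Real.mul_rpow (x := 6 * π * δ) (by positivity) (by positivity)]
        norm_num
        ring_nf
    _ ≤ ENNReal.ofReal ((400 * p) ^ p * δ) := by
        refine ENNReal.ofReal_le_ofReal ?_
        have h_sqrt : (6 * π * δ * (13 * π * δ)) ^ (1 / 2 : ℝ) ≤ 50 * δ := by
          rw [← Real.sqrt_eq_rpow]
          refine Real.sqrt_le_iff.2 ⟨by positivity, ?_⟩
          have h_pi : π ^ 2 ≤ 16 := by nlinarith [Real.pi_lt_four, Real.pi_pos]
          nlinarith [sq_nonneg δ]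
        calc (2 * p) ^ p * (4 * (6 * π * δ * (13 * π * δ)) ^ (1 / 2 : ℝ))
            ≤ (2 * p) ^ p * (4 * (50 * δ)) := by gcongr
          _ = 200 * (2 * p) ^ p * δ := by ring
          _ ≤ 200 ^ p * (2 * p) ^ p * δ := by
            gcongr
            exact Real.self_le_rpow_of_one_le (by norm_num) hp
          _ = (400 * p) ^ p * δ := by
            rw [← Real.mul_rpow (by positivity) (by positivity)]
            ring_nf

lemma setLIntegral_Ioc_nearGreen_rpow_le (hp : 1 ≤ p) (hδ₀ : 0 < δ) (hδ₁ : δ ≤ 1 / 30) (a : ℝ)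
    {h : ℝ} (hh : h ≤ 2 * π * δ) (hζ : ‖ζ‖ < 1) :
    ∫⁻ φ in Ioc a (a + h), nearGreen (circleMap 0 (1 - δ) φ) ζ ^ p ≤
      ENNReal.ofReal ((400 * p) ^ p * δ) := by
  have hp₀ : 0 < p := by linarith
  by_cases h_zero : ∀ φ ∈ Ioc a (a + h), nearGreen (circleMap 0 (1 - δ) φ) ζ = 0
  · rw [setLIntegral_congr_fun (g := fun _ ↦ 0) measurableSet_Ioc fun φ hφ ↦ by
      simp only [h_zero φ hφ, ENNReal.zero_rpow_of_pos hp₀], lintegral_zero]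
    exact zero_le
  push Not at h_zero
  obtain ⟨φ₀, hφ₀, h_ne⟩ := h_zero
  obtain ⟨-, -, -, α, hα, h_polar⟩ :=
    mem_of_nearGreen_circleMap_ne_zero hδ₀ (by linarith) hζ h_ne
  rw [← circleMap_zero] at h_polar
  generalize ‖ζ‖ = R at h_polar
  subst h_polar
  refine (lintegral_mono_set fun φ hφ ↦ ?_).trans
    (setLIntegral_Icc_nearGreen_circleMap_rpow_le hp hδ₀ hδ₁ hζ)
  obtain ⟨h_lower, h_upper⟩ := abs_le.1 hα
  constructor <;> linarith [hφ.1, hφ.2, hφ₀.1, hφ₀.2]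

/-- The truncated Carleson box over the angle `a` that contains every pole `ζ` whose cut-off Green
function is felt on an arc of length `2πδ` starting at angle `a` of the circle of radius `1 - δ`. -/
def nearRegion (a δ : ℝ) : Set ℂ := {ζ | 3 / 16 * δ ≤ 1 - ‖ζ‖} ∩ carlesonBox a (13 * δ)

lemma measurableSet_nearRegion (a δ : ℝ) : MeasurableSet (nearRegion a δ) :=
  (measurableSet_le measurable_const (by fun_prop)).inter (measurableSet_carlesonBox a _)

variable {μ : Measure ℂ} {a : ℝ} (ψ : Measure ℝ)

lemma setLIntegral_nearRegion_nearGreen (μ : Measure ℂ) (hδ₀ : 0 < δ) (hδ₁ : δ < 1)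
    (hφ : |φ - a| ≤ 2 * π * δ) :
    ∫⁻ ζ in nearRegion a δ, nearGreen (circleMap 0 (1 - δ) φ) ζ ∂μ.restrict (ball 0 1)
      = ∫⁻ ζ in ball 0 1, nearGreen (circleMap 0 (1 - δ) φ) ζ ∂μ := by
  rw [← lintegral_indicator (measurableSet_nearRegion a δ)]
  refine lintegral_congr_ae ?_
  filter_upwards [ae_restrict_ball_norm_lt_one μ] with ζ hζ
  refine indicator_apply_eq_self.2 fun h_notMem ↦ by_contra fun h_ne ↦ h_notMem ?_
  obtain ⟨h_norm, h_box⟩ := mem_of_nearGreen_circleMap_ne_zero hδ₀ hδ₁ hζ h_ne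
  exact ⟨h_norm, carlesonBox_subset_carlesonBox (by linarith) h_box⟩

lemma restrict_ball_nearRegion_le (hδ₀ : 0 < δ) (hφ : |φ - a| ≤ 2 * π * δ) :
    μ.restrict (ball 0 1) (nearRegion a δ) ≤
      ENNReal.ofReal (16 / (3 * δ)) * completeMeasure μ ψ (carlesonBox φ (15 * δ)) := by
  have h_subset : nearRegion a δ ⊆ carlesonBox φ (15 * δ) :=
    inter_subset_right.trans
      (carlesonBox_subset_carlesonBox (by rw [abs_sub_comm]; linarith))
  calc μ.restrict (ball 0 1) (nearRegion a δ)
      = ENNReal.ofReal (16 / (3 * δ)) *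
          (ENNReal.ofReal (3 / 16 * δ) * μ.restrict (ball 0 1) (nearRegion a δ)) := by
        rw [← mul_assoc, ← ENNReal.ofReal_mul (by positivity),
          show 16 / (3 * δ) * (3 / 16 * δ) = 1 by field_simp, ENNReal.ofReal_one, one_mul]
    _ ≤ ENNReal.ofReal (16 / (3 * δ)) * completeMeasure μ ψ (carlesonBox φ (15 * δ)) := by
        gcongr
        exact (ofReal_mul_restrict_ball_le_completeMeasure ψ (measurableSet_nearRegion a δ)
          fun ζ hζ ↦ hζ.1).trans (measure_mono h_subset)

lemma setLIntegral_Ioc_lintegral_nearGreen_rpow_le [SFinite (μ.restrict (ball 0 1))] (hp : 1 ≤ p)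
    (hδ₀ : 0 < δ) (hδ₁ : δ ≤ 1 / 30) (a : ℝ) {h : ℝ} (hh₀ : π * δ ≤ h) (hh₁ : h ≤ 2 * π * δ) :
    ∫⁻ φ in Ioc a (a + h), (∫⁻ ζ in ball 0 1, nearGreen (circleMap 0 (1 - δ) φ) ζ ∂μ) ^ p ≤
      ∫⁻ φ in Ioc a (a + h), (ENNReal.ofReal (2200 * p / δ) *
        completeMeasure μ ψ (carlesonBox φ (15 * δ))) ^ p := by
  have hp₀ : 0 < p := by linarith
  set m := μ.restrict (ball 0 1)
  have h_abs {φ : ℝ} (hφ : φ ∈ Ioc a (a + h)) : |φ - a| ≤ 2 * π * δ := by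
    rw [abs_of_pos (sub_pos.2 hφ.1)]
    linarith [hφ.2]
  calc ∫⁻ φ in Ioc a (a + h), (∫⁻ ζ, nearGreen (circleMap 0 (1 - δ) φ) ζ ∂m) ^ p
      = ∫⁻ φ in Ioc a (a + h),
          (∫⁻ ζ in nearRegion a δ, nearGreen (circleMap 0 (1 - δ) φ) ζ ∂m) ^ p :=
        setLIntegral_congr_fun measurableSet_Ioc fun φ hφ ↦ by
          simp only [m, setLIntegral_nearRegion_nearGreen μ hδ₀ (by linarith) (h_abs hφ)]
    _ ≤ m (nearRegion a δ) ^ p * ENNReal.ofReal ((400 * p) ^ p * δ) := by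
        rw [← Measure.restrict_apply_univ (nearRegion a δ)]
        refine lintegral_rpow_lintegral_le hp (by fun_prop) ?_
        filter_upwards [ae_restrict_of_ae (ae_restrict_ball_norm_lt_one μ)] with ζ hζ
        exact setLIntegral_Ioc_nearGreen_rpow_le hp hδ₀ hδ₁ a hh₁ hζ
    _ ≤ ∫⁻ _ in Ioc a (a + h), (ENNReal.ofReal (400 * p) * m (nearRegion a δ)) ^ p := by
        rw [setLIntegral_const, Real.volume_Ioc, add_sub_cancel_left, mul_comm (ENNReal.ofReal _),
          ENNReal.mul_rpow_of_nonneg _ _ hp₀.le, mul_assoc,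
          ENNReal.ofReal_rpow_of_nonneg (by positivity) hp₀.le,
          ← ENNReal.ofReal_mul (by positivity)]
        gcongr
        nlinarith [Real.pi_gt_three]
    _ ≤ ∫⁻ φ in Ioc a (a + h), (ENNReal.ofReal (2200 * p / δ) *
          completeMeasure μ ψ (carlesonBox φ (15 * δ))) ^ p := by
        refine setLIntegral_mono' measurableSet_Ioc fun φ hφ ↦ ENNReal.rpow_le_rpow ?_ hp₀.le
        refine (mul_le_mul_right (restrict_ball_nearRegion_le ψ hδ₀ (h_abs hφ)) _).trans ?_
        rw [← mul_assoc, ← ENNReal.ofReal_mul (by positivity)]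
        gcongr
        rw [mul_div_assoc', div_le_div_iff₀ (by positivity) hδ₀]
        nlinarith [mul_pos hp₀ (mul_pos hδ₀ hδ₀)]

lemma eLpNorm'_lintegral_nearGreen_le [SFinite (μ.restrict (ball 0 1))] (hp : 1 ≤ p)
    (hδ₀ : 0 < δ) (hδ₁ : δ ≤ 1 / 30) :
    eLpNorm' (fun φ ↦ ∫⁻ ζ in ball 0 1, nearGreen (circleMap 0 (1 - δ) φ) ζ ∂μ) p
        (volume.restrict (Ioc 0 (2 * π))) ≤
      ENNReal.ofReal (2200 * p / δ) * carlesonNorm (completeMeasure μ ψ) p (15 * δ) := by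
  set n := ⌈1 / δ⌉₊
  have hn₀ : 1 ≤ n * δ := (div_le_iff₀ hδ₀).1 (Nat.le_ceil (1 / δ))
  have hn₁ : n * δ ≤ 2 := by
    have h_lt : n < 1 / δ + 1 := Nat.ceil_lt_add_one (by positivity)
    have h_mul : n * δ < (1 / δ + 1) * δ := mul_lt_mul_of_pos_right h_lt hδ₀
    rw [add_one_mul, one_div_mul_cancel hδ₀.ne'] at h_mul
    linarith
  have hn : (0 : ℝ) < n := pos_of_mul_pos_left (by linarith) hδ₀.le
  have h_arcs := setLIntegral_Ioc_zero_nat_mul_le (h := 2 * π / n) (by positivity)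
    (fun a ↦ setLIntegral_Ioc_lintegral_nearGreen_rpow_le (μ := μ) ψ hp hδ₀ hδ₁ a
      (by rw [le_div_iff₀ hn]; nlinarith [Real.pi_pos])
      (by rw [div_le_iff₀ hn]; nlinarith [Real.pi_pos])) n
  rw [mul_div_cancel₀ _ hn.ne'] at h_arcs
  rw [carlesonNorm, ← eLpNorm'_ennreal_const_mul (by linarith) ENNReal.ofReal_ne_top]
  simp only [eLpNorm'_eq_lintegral_enorm, enorm_eq_self]
  gcongr

end NearPart

section FarPart

variable {m : Measure ℂ} {p δ γ : ℝ}

lemma carlesonNorm_le (hp : 0 < p) (m : Measure ℂ) (s : ℝ) :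
    carlesonNorm m p s ≤ m univ * ENNReal.ofReal (2 * π) ^ (1 / p) := by
  refine (eLpNorm'_mono_enorm_ae hp.le (g := fun _ ↦ m univ) <| ae_of_all _ fun _ ↦
    measure_mono (subset_univ _)).trans_eq ?_
  rw [eLpNorm'_const _ hp, Measure.restrict_apply_univ, Real.volume_Ioc, sub_zero, enorm_eq_self]

lemma lintegral_extPoisson_circleMap_le_sum (hm : ∀ᵐ ζ ∂m, ‖ζ‖ ≤ 1) (hδ₀ : 0 < δ) (hδ₁ : δ < 1)
    {n : ℕ} (hn : 2 < 2 ^ n * δ) (φ : ℝ) :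
    ∫⁻ ζ, ENNReal.ofReal (extPoisson (circleMap 0 (1 - δ) φ) ζ) ∂m ≤
      ∑ k ∈ Finset.range n,
        ENNReal.ofReal (2 / δ * (1 / 4) ^ k) * m (carlesonBox φ (4 * (2 ^ k * δ))) :=
  calc ∫⁻ ζ, ENNReal.ofReal (extPoisson (circleMap 0 (1 - δ) φ) ζ) ∂m
      ≤ ∫⁻ ζ, ∑ k ∈ Finset.range n, ENNReal.ofReal (2 / δ * (1 / 4) ^ k) *
          (carlesonBox φ (4 * (2 ^ k * δ))).indicator 1 ζ ∂m :=
        lintegral_mono_ae <| hm.mono fun ζ hζ ↦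
          extPoisson_le_sum_indicator_carlesonBox hδ₀ hδ₁ hn hζ
    _ = ∑ k ∈ Finset.range n,
          ENNReal.ofReal (2 / δ * (1 / 4) ^ k) * m (carlesonBox φ (4 * (2 ^ k * δ))) := by
        have h_meas (k : ℕ) :
            Measurable ((carlesonBox φ (4 * (2 ^ k * δ))).indicator (1 : ℂ → ℝ≥0∞)) :=
          measurable_one.indicator (measurableSet_carlesonBox _ _)
        rw [lintegral_finsetSum _ fun k _ ↦ (h_meas k).const_mul _]
        refine Finset.sum_congr rfl fun k _ ↦ ?_
        rw [lintegral_const_mul _ (h_meas k),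
          lintegral_indicator_one (measurableSet_carlesonBox _ _)]

lemma eLpNorm'_lintegral_extPoisson_le_sum [SFinite m] (hm : ∀ᵐ ζ ∂m, ‖ζ‖ ≤ 1) (hp : 1 ≤ p)
    (hδ₀ : 0 < δ) (hδ₁ : δ < 1) {n : ℕ} (hn : 2 < 2 ^ n * δ) :
    eLpNorm' (fun φ ↦ ∫⁻ ζ, ENNReal.ofReal (extPoisson (circleMap 0 (1 - δ) φ) ζ) ∂m) p
        (volume.restrict (Ioc 0 (2 * π))) ≤
      ∑ k ∈ Finset.range n,
        ENNReal.ofReal (2 / δ * (1 / 4) ^ k) * carlesonNorm m p (4 * (2 ^ k * δ)) := by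
  have hp₀ : 0 < p := by linarith
  set f : ℕ → ℝ → ℝ≥0∞ := fun k φ ↦
    ENNReal.ofReal (2 / δ * (1 / 4) ^ k) * m (carlesonBox φ (4 * (2 ^ k * δ)))
  have hf (k : ℕ) : Measurable (f k) := (measurable_measure_carlesonBox m _).const_mul _
  calc eLpNorm' (fun φ ↦ ∫⁻ ζ, ENNReal.ofReal (extPoisson (circleMap 0 (1 - δ) φ) ζ) ∂m) p
        (volume.restrict (Ioc 0 (2 * π)))
      ≤ eLpNorm' (∑ k ∈ Finset.range n, f k) p (volume.restrict (Ioc 0 (2 * π))) := by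
        refine eLpNorm'_mono_enorm_ae hp₀.le (ae_of_all _ fun φ ↦ ?_)
        simpa only [enorm_eq_self, Finset.sum_apply] using
          lintegral_extPoisson_circleMap_le_sum hm hδ₀ hδ₁ hn φ
    _ ≤ ∑ k ∈ Finset.range n, eLpNorm' (f k) p (volume.restrict (Ioc 0 (2 * π))) :=
        eLpNorm'_sum_le (fun k _ ↦ (hf k).aestronglyMeasurable) hp
    _ = _ := Finset.sum_congr rfl fun k _ ↦
        eLpNorm'_ennreal_const_mul hp₀ ENNReal.ofReal_ne_top _

lemma dyadic_weight_mul_rpow_le (hδ : 0 < δ) (hγ : γ ≤ 1) (k : ℕ) :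
    2 / δ * (1 / 4) ^ k * (4 * (2 ^ k * δ)) ^ γ ≤ 8 * δ ^ (γ - 1) * (1 / 2) ^ k := by
  have h_one : (1 : ℝ) ≤ 4 * 2 ^ k := by linarith [one_le_pow₀ (M₀ := ℝ) one_le_two (n := k)]
  calc 2 / δ * (1 / 4) ^ k * (4 * (2 ^ k * δ)) ^ γ
      = 2 / δ * (1 / 4) ^ k * ((4 * 2 ^ k) ^ γ * δ ^ γ) := by
        rw [← mul_assoc 4, Real.mul_rpow (by positivity) hδ.le]
    _ ≤ 2 / δ * (1 / 4) ^ k * ((4 * 2 ^ k) * δ ^ γ) := by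
        gcongr
        exact (Real.rpow_le_rpow_of_exponent_le h_one hγ).trans_eq (Real.rpow_one _)
    _ = 8 * (δ ^ γ / δ) * ((1 / 4) ^ k * 2 ^ k) := by ring
    _ = 8 * δ ^ (γ - 1) * (1 / 2) ^ k := by
        rw [Real.rpow_sub_one hδ.ne', ← mul_pow]
        norm_num

lemma eLpNorm'_lintegral_extPoisson_le [SFinite m] (hm : ∀ᵐ ζ ∂m, ‖ζ‖ ≤ 1) (hp : 1 ≤ p)
    (hγ : γ ≤ 1) {D : ℝ≥0∞} (hD : ∀ s > 0, carlesonNorm m p s ≤ D * ENNReal.ofReal (s ^ γ))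
    (hδ₀ : 0 < δ) (hδ₁ : δ < 1) :
    eLpNorm' (fun φ ↦ ∫⁻ ζ, ENNReal.ofReal (extPoisson (circleMap 0 (1 - δ) φ) ζ) ∂m) p
        (volume.restrict (Ioc 0 (2 * π))) ≤
      D * ENNReal.ofReal (16 * δ ^ (γ - 1)) := by
  obtain ⟨n, hn⟩ := pow_unbounded_of_one_lt (2 / δ) one_lt_two
  rw [div_lt_iff₀ hδ₀] at hn
  refine (eLpNorm'_lintegral_extPoisson_le_sum hm hp hδ₀ hδ₁ hn).trans ?_
  calc ∑ k ∈ Finset.range n,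
        ENNReal.ofReal (2 / δ * (1 / 4) ^ k) * carlesonNorm m p (4 * (2 ^ k * δ))
      ≤ ∑ k ∈ Finset.range n, D * ENNReal.ofReal (8 * δ ^ (γ - 1) * (1 / 2) ^ k) := by
        refine Finset.sum_le_sum fun k _ ↦ ?_
        refine (mul_le_mul_right (hD (4 * (2 ^ k * δ)) (by positivity)) _).trans ?_
        rw [mul_left_comm, ← ENNReal.ofReal_mul (by positivity)]
        exact mul_le_mul_right (ENNReal.ofReal_le_ofReal (dyadic_weight_mul_rpow_le hδ₀ hγ k)) D
    _ = D * ENNReal.ofReal (8 * δ ^ (γ - 1) * ∑ k ∈ Finset.range n, (1 / 2) ^ k) := by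
        rw [← Finset.mul_sum, ← ENNReal.ofReal_sum_of_nonneg fun _ _ ↦ by positivity,
          Finset.mul_sum]
    _ ≤ D * ENNReal.ofReal (16 * δ ^ (γ - 1)) := by
        refine mul_le_mul_right (ENNReal.ofReal_le_ofReal ?_) D
        nlinarith [sum_geometric_two_le n, Real.rpow_nonneg hδ₀.le (γ - 1)]

end FarPart

section Potential

variable {μ : Measure ℂ} {ψ : Measure ℝ} {p δ γ : ℝ} {z ζ : ℂ}

/-- The sum of the Green potential of `μ` and the Poisson integral of `ψ`. A function with Riesz
measure `μ` and boundary measure `ψ` is a constant minus this quantity, which takes values in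
`[0, ∞]` so that no integrability has to be assumed. -/
noncomputable def diskPotential (μ : Measure ℂ) (ψ : Measure ℝ) (z : ℂ) : ℝ≥0∞ :=
  (∫⁻ ζ in ball 0 1, ENNReal.ofReal (greenFun z ζ) ∂μ) +
    ENNReal.ofReal (1 / (2 * π)) * ∫⁻ t, ENNReal.ofReal (extPoisson z (circleMap 0 1 t)) ∂ψ

lemma measurable_diskPotential_circleMap [SFinite (μ.restrict (ball 0 1))] [SFinite ψ] (r : ℝ) :
    Measurable fun φ ↦ diskPotential μ ψ (circleMap 0 r φ) := by
  have h_green : Measurable fun q : ℝ × ℂ ↦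
      ENNReal.ofReal (greenFun (circleMap 0 r q.1) q.2) := by fun_prop
  have h_poisson : Measurable fun q : ℝ × ℝ ↦
      ENNReal.ofReal (extPoisson (circleMap 0 r q.1) (circleMap 0 1 q.2)) := by fun_prop
  exact h_green.lintegral_prod_right'.add (h_poisson.lintegral_prod_right'.const_mul _)

lemma ofReal_greenFun_le (hz : ‖z‖ < 1) (hζ : ‖ζ‖ ≤ 1) :
    ENNReal.ofReal (greenFun z ζ) ≤
      nearGreen z ζ + 4 * (ENNReal.ofReal (1 - ‖ζ‖) * ENNReal.ofReal (extPoisson z ζ)) := by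
  by_cases h : pseudoHypDist z ζ < 1 / 2
  · rw [nearGreen, if_pos h]
    exact le_self_add
  · have h_four : (4 : ℝ≥0∞) = ENNReal.ofReal 4 := by simp
    rw [nearGreen, if_neg h, zero_add, ← ENNReal.ofReal_mul (sub_nonneg.2 hζ), h_four,
      ← ENNReal.ofReal_mul (by norm_num)]
    exact ENNReal.ofReal_le_ofReal (greenFun_le_of_half_le_pseudoHypDist hz hζ (not_lt.1 h))

lemma diskPotential_le (μ : Measure ℂ) (ψ : Measure ℝ) (hz : ‖z‖ < 1) :
    diskPotential μ ψ z ≤ (∫⁻ ζ in ball 0 1, nearGreen z ζ ∂μ) +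
      4 * ∫⁻ ζ, ENNReal.ofReal (extPoisson z ζ) ∂completeMeasure μ ψ := by
  have h_const : ENNReal.ofReal (1 / (2 * π)) ≤ 4 := by
    rw [ENNReal.ofReal_le_iff_le_toReal (by simp), div_le_iff₀ (by positivity)]
    norm_num
    linarith [Real.pi_gt_three]
  rw [diskPotential, lintegral_completeMeasure (by fun_prop), mul_add, ← add_assoc]
  gcongr
  rw [← lintegral_const_mul _ (by fun_prop), ← lintegral_add_left (by fun_prop)]
  refine lintegral_mono_ae ?_
  filter_upwards [ae_restrict_ball_norm_lt_one μ] with ζ hζ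
  exact ofReal_greenFun_le hz hζ.le

lemma eLpNorm'_lintegral_nearGreen_le_rpow [SFinite (μ.restrict (ball 0 1))]
    (hp : 1 ≤ p) (hγ : γ ≤ 1) {D : ℝ≥0∞}
    (hD : ∀ s > 0, carlesonNorm (completeMeasure μ ψ) p s ≤ D * ENNReal.ofReal (s ^ γ))
    (hδ₀ : 0 < δ) (hδ₁ : δ ≤ 1 / 30) :
    eLpNorm' (fun φ ↦ ∫⁻ ζ in ball 0 1, nearGreen (circleMap 0 (1 - δ) φ) ζ ∂μ) p
        (volume.restrict (Ioc 0 (2 * π))) ≤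
      D * ENNReal.ofReal (33000 * p * δ ^ (γ - 1)) :=
  calc eLpNorm' (fun φ ↦ ∫⁻ ζ in ball 0 1, nearGreen (circleMap 0 (1 - δ) φ) ζ ∂μ) p
        (volume.restrict (Ioc 0 (2 * π)))
      ≤ ENNReal.ofReal (2200 * p / δ) * carlesonNorm (completeMeasure μ ψ) p (15 * δ) :=
        eLpNorm'_lintegral_nearGreen_le ψ hp hδ₀ hδ₁
    _ ≤ ENNReal.ofReal (2200 * p / δ) * (D * ENNReal.ofReal (15 * δ ^ γ)) := by
        refine mul_le_mul_right ((hD _ (by positivity)).trans ?_) _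
        rw [Real.mul_rpow (by norm_num) hδ₀.le]
        gcongr
        exact (Real.rpow_le_rpow_of_exponent_le (by norm_num) hγ).trans_eq (Real.rpow_one _)
    _ = D * ENNReal.ofReal (33000 * p * δ ^ (γ - 1)) := by
        rw [mul_left_comm, ← ENNReal.ofReal_mul (by positivity), Real.rpow_sub_one hδ₀.ne']
        ring_nf

lemma eLpNorm'_diskPotential_le_near_add_far [SFinite (μ.restrict (ball 0 1))] [SFinite ψ]
    (hp : 1 ≤ p) (hδ₀ : 0 < δ) (hδ₁ : δ ≤ 1) :
    eLpNorm' (fun φ ↦ diskPotential μ ψ (circleMap 0 (1 - δ) φ)) p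
        (volume.restrict (Ioc 0 (2 * π))) ≤
      eLpNorm' (fun φ ↦ ∫⁻ ζ in ball 0 1, nearGreen (circleMap 0 (1 - δ) φ) ζ ∂μ) p
        (volume.restrict (Ioc 0 (2 * π))) +
      4 * eLpNorm' (fun φ ↦ ∫⁻ ζ, ENNReal.ofReal (extPoisson (circleMap 0 (1 - δ) φ) ζ)
        ∂completeMeasure μ ψ) p (volume.restrict (Ioc 0 (2 * π))) := by
  have : SFinite (completeMeasure μ ψ) := by unfold completeMeasure; infer_instance
  have h_near : Measurable fun φ ↦ ∫⁻ ζ in ball 0 1, nearGreen (circleMap 0 (1 - δ) φ) ζ ∂μ :=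
    Measurable.lintegral_prod_right'
      (f := fun q : ℝ × ℂ ↦ nearGreen (circleMap 0 (1 - δ) q.1) q.2) (by fun_prop)
  have h_far : Measurable fun φ ↦
      ∫⁻ ζ, ENNReal.ofReal (extPoisson (circleMap 0 (1 - δ) φ) ζ) ∂completeMeasure μ ψ :=
    Measurable.lintegral_prod_right'
      (f := fun q : ℝ × ℂ ↦ ENNReal.ofReal (extPoisson (circleMap 0 (1 - δ) q.1) q.2))
      (by fun_prop)
  rw [← eLpNorm'_ennreal_const_mul (by linarith) (by simp)]
  refine le_trans (eLpNorm'_mono_enorm_ae (by linarith) (ae_of_all _ fun φ ↦ ?_))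
    (eLpNorm'_add_le h_near.aestronglyMeasurable (h_far.const_mul 4).aestronglyMeasurable hp)
  refine diskPotential_le μ ψ ?_
  rw [norm_circleMap_one_sub hδ₁]
  linarith

lemma eLpNorm'_diskPotential_circleMap_le [SFinite (μ.restrict (ball 0 1))] [SFinite ψ]
    (hp : 1 ≤ p) (hγ : γ ≤ 1) {D : ℝ≥0∞}
    (hD : ∀ s > 0, carlesonNorm (completeMeasure μ ψ) p s ≤ D * ENNReal.ofReal (s ^ γ))
    (hδ₀ : 0 < δ) (hδ₁ : δ ≤ 1 / 30) :
    eLpNorm' (fun φ ↦ diskPotential μ ψ (circleMap 0 (1 - δ) φ)) p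
        (volume.restrict (Ioc 0 (2 * π))) ≤
      D * ENNReal.ofReal (40000 * p * δ ^ (γ - 1)) := by
  have : SFinite (completeMeasure μ ψ) := by unfold completeMeasure; infer_instance
  have h_near := eLpNorm'_lintegral_nearGreen_le_rpow hp hγ hD hδ₀ hδ₁
  have h_far := eLpNorm'_lintegral_extPoisson_le (ae_completeMeasure_norm_le_one μ ψ) hp hγ hD hδ₀
    (by linarith)
  refine (eLpNorm'_diskPotential_le_near_add_far hp hδ₀ (by linarith)).trans ?_
  refine (add_le_add h_near (mul_le_mul_right h_far 4)).trans ?_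
  calc D * ENNReal.ofReal (33000 * p * δ ^ (γ - 1)) + 4 * (D * ENNReal.ofReal (16 * δ ^ (γ - 1)))
      = D * ENNReal.ofReal (33000 * p * δ ^ (γ - 1) + 4 * (16 * δ ^ (γ - 1))) := by
        have h_four : ENNReal.ofReal 4 = 4 := by simp
        rw [ENNReal.ofReal_add (by positivity) (by positivity),
          ENNReal.ofReal_mul (by norm_num : (0 : ℝ) ≤ 4), h_four]
        ring
    _ ≤ D * ENNReal.ofReal (40000 * p * δ ^ (γ - 1)) := by
        refine mul_le_mul_right (ENNReal.ofReal_le_ofReal ?_) D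
        nlinarith [Real.rpow_nonneg hδ₀.le (γ - 1)]

lemma measure_carlesonBox_le_lintegral_extPoisson (m : Measure ℂ) (hδ₀ : 0 < δ) (hδ₁ : δ ≤ 1)
    (φ : ℝ) :
    m (carlesonBox φ δ) ≤ ENNReal.ofReal (36 * δ) *
      ∫⁻ ζ, ENNReal.ofReal (extPoisson (circleMap 0 (1 - δ) φ) ζ) ∂m := by
  have h_norm := norm_circleMap_one_sub hδ₁ φ
  have h_box {ζ : ℂ} (hζ : ζ ∈ carlesonBox φ δ) :
      1 ≤ 36 * δ * extPoisson (circleMap 0 (1 - δ) φ) ζ := by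
    have h_pos := norm_one_sub_mul_conj_pos (z := circleMap 0 (1 - δ) φ) (by linarith) hζ.1
    have h_le := norm_one_sub_mul_conj_le_of_mem_carlesonBox hδ₀.le hδ₁ hζ
    rw [extPoisson, h_norm, ← mul_div_assoc, one_le_div (by positivity)]
    nlinarith [mul_nonneg (sq_nonneg δ) (sub_nonneg.2 hδ₁)]
  rw [← lintegral_indicator_one (measurableSet_carlesonBox φ δ),
    ← lintegral_const_mul _ (by fun_prop)]
  refine lintegral_mono (indicator_le fun ζ hζ ↦ ?_)
  rw [Pi.one_apply, ← ENNReal.ofReal_mul (by positivity), ← ENNReal.ofReal_one]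
  exact ENNReal.ofReal_le_ofReal (h_box hζ)

lemma lintegral_extPoisson_completeMeasure_le (ψ : Measure ℝ) (hz : ‖z‖ < 1)
    (h_atom : μ.restrict (ball 0 1) {z} = 0) :
    ∫⁻ ζ, ENNReal.ofReal (extPoisson z ζ) ∂completeMeasure μ ψ ≤
      ENNReal.ofReal (2 * π) * diskPotential μ ψ z := by
  rw [lintegral_completeMeasure (by fun_prop), diskPotential, mul_add, ← mul_assoc,
    ← ENNReal.ofReal_mul (by positivity), mul_one_div_cancel (by positivity), ENNReal.ofReal_one,
    one_mul, ← lintegral_const_mul _ (by fun_prop)]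
  refine add_le_add_left (lintegral_mono_ae ?_) _
  filter_upwards [ae_restrict_ball_norm_lt_one μ, measure_eq_zero_iff_ae_notMem.1 h_atom]
    with ζ hζ h_ne
  rw [← ENNReal.ofReal_mul (sub_nonneg.2 hζ.le), ← ENNReal.ofReal_mul (by positivity)]
  refine ENNReal.ofReal_le_ofReal
    ((one_sub_norm_mul_extPoisson_le_greenFun hz hζ.le fun h ↦ h_ne h.symm).trans ?_)
  nlinarith [greenFun_nonneg hz hζ.le, Real.pi_gt_three]

lemma ae_measure_singleton_circleMap_eq_zero (m : Measure ℂ) [SFinite m] {r : ℝ} (hr : r ≠ 0) :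
    ∀ᵐ φ : ℝ, m {circleMap 0 r φ} = 0 := by
  have h_atoms : {w : ℂ | 0 < m {w}}.Countable :=
    Measure.countable_meas_level_set_pos (g := id) measurable_id
  filter_upwards [measure_eq_zero_iff_ae_notMem.1
    ((h_atoms.preimage_circleMap 0 hr).measure_zero volume)] with φ hφ
  simpa using hφ

lemma carlesonNorm_completeMeasure_le [SFinite (μ.restrict (ball 0 1))] (ψ : Measure ℝ)
    (hp : 0 < p) (hδ₀ : 0 < δ) (hδ₁ : δ < 1) :
    carlesonNorm (completeMeasure μ ψ) p δ ≤ ENNReal.ofReal (72 * π * δ) *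
      eLpNorm' (fun φ ↦ diskPotential μ ψ (circleMap 0 (1 - δ) φ)) p
        (volume.restrict (Ioc 0 (2 * π))) := by
  rw [← eLpNorm'_ennreal_const_mul hp ENNReal.ofReal_ne_top]
  refine eLpNorm'_mono_enorm_ae hp.le (ae_restrict_of_ae ?_)
  filter_upwards [ae_measure_singleton_circleMap_eq_zero (μ.restrict (ball 0 1))
    (sub_ne_zero.2 hδ₁.ne')] with φ h_atom
  have h_norm : ‖circleMap 0 (1 - δ) φ‖ < 1 := by
    rw [norm_circleMap_one_sub hδ₁.le]
    linarith
  calc completeMeasure μ ψ (carlesonBox φ δ)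
      ≤ ENNReal.ofReal (36 * δ) * ∫⁻ ζ, ENNReal.ofReal (extPoisson (circleMap 0 (1 - δ) φ) ζ)
          ∂completeMeasure μ ψ :=
        measure_carlesonBox_le_lintegral_extPoisson _ hδ₀ hδ₁.le φ
    _ ≤ ENNReal.ofReal (36 * δ) *
          (ENNReal.ofReal (2 * π) * diskPotential μ ψ (circleMap 0 (1 - δ) φ)) :=
        mul_le_mul_right (lintegral_extPoisson_completeMeasure_le ψ h_norm h_atom) _
    _ = ENNReal.ofReal (72 * π * δ) * diskPotential μ ψ (circleMap 0 (1 - δ) φ) := by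
        rw [← mul_assoc, ← ENNReal.ofReal_mul (by positivity)]
        ring_nf

end Potential

section MeanGrowth

variable {E F : Type*} [ENorm E] [ENorm F] {m : Measure ℂ} {p a γ : ℝ}

/-- The `L^p` means of `u` over the circles of radius `1 - δ` are `O(δ ^ a)` as `δ ↓ 0`. The
circles carry arc length, not normalised. -/
def HasMeanGrowth (u : ℂ → E) (p a : ℝ) : Prop :=
  ∃ A : ℝ≥0∞, A ≠ ∞ ∧ ∀ᶠ δ in 𝓝[>] 0,
    eLpNorm' (fun φ ↦ u (circleMap 0 (1 - δ) φ)) p (volume.restrict (Ioc 0 (2 * π))) ≤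
      A * ENNReal.ofReal (δ ^ a)

/-- The `L^p` Carleson condition of order `γ`: the masses of the boxes `C(φ, s)` have `L^p` norm
`O(s ^ γ)` in `φ`. Admitting `s ≥ 1` is harmless, since `C(φ, s)` is then the closed disc. -/
def IsCarlesonOfOrder (m : Measure ℂ) (p γ : ℝ) : Prop :=
  ∃ D : ℝ≥0∞, D ≠ ∞ ∧ ∀ s > 0, carlesonNorm m p s ≤ D * ENNReal.ofReal (s ^ γ)

lemma HasMeanGrowth.eventually_ne_top {u : ℂ → E} (hu : HasMeanGrowth u p a) :
    ∀ᶠ δ in 𝓝[>] 0, eLpNorm' (fun φ ↦ u (circleMap 0 (1 - δ) φ)) p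
      (volume.restrict (Ioc 0 (2 * π))) ≠ ∞ := by
  obtain ⟨A, hA, h⟩ := hu
  exact h.mono fun δ hδ ↦ ne_top_of_le_ne_top (by finiteness) hδ

lemma HasMeanGrowth.of_enorm_le_const_add {u : ℂ → E} {v : ℂ → F} (hv : HasMeanGrowth v p a)
    (hp : 1 ≤ p) (ha : a ≤ 0) {c : ℝ≥0∞} (hc : c ≠ ∞)
    (h_meas : ∀ᶠ δ in 𝓝[>] 0, AEMeasurable (fun φ ↦ ‖v (circleMap 0 (1 - δ) φ)‖ₑ)
      (volume.restrict (Ioc 0 (2 * π))))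
    (h_le : ∀ᶠ δ in 𝓝[>] 0, ∀ᵐ φ ∂volume.restrict (Ioc 0 (2 * π)),
      ‖u (circleMap 0 (1 - δ) φ)‖ₑ ≤ c + ‖v (circleMap 0 (1 - δ) φ)‖ₑ) :
    HasMeanGrowth u p a := by
  obtain ⟨A, hA, h_bound⟩ := hv
  set K := (volume.restrict (Ioc 0 (2 * π))) univ ^ (1 / p)
  have hK : K ≠ ∞ := ENNReal.rpow_ne_top_of_nonneg (by positivity) (measure_ne_top _ _)
  refine ⟨c * K + A, by finiteness, ?_⟩
  filter_upwards [h_bound, h_meas, h_le, Ioo_mem_nhdsGT one_pos] with δ h_bound h_meas h_le hδ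
  have h_one : 1 ≤ ENNReal.ofReal (δ ^ a) :=
    ENNReal.one_le_ofReal.2 (Real.one_le_rpow_of_pos_of_le_one_of_nonpos hδ.1 hδ.2.le ha)
  calc eLpNorm' (fun φ ↦ u (circleMap 0 (1 - δ) φ)) p (volume.restrict (Ioc 0 (2 * π)))
      ≤ c * K + eLpNorm' (fun φ ↦ v (circleMap 0 (1 - δ) φ)) p
          (volume.restrict (Ioc 0 (2 * π))) := eLpNorm'_le_const_add hp h_meas h_le
    _ ≤ c * K * ENNReal.ofReal (δ ^ a) + A * ENNReal.ofReal (δ ^ a) :=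
        add_le_add (le_mul_of_one_le_right' h_one) h_bound
    _ = (c * K + A) * ENNReal.ofReal (δ ^ a) := (add_mul ..).symm

lemma eLpNorm'_circleMap_eq_mpMean (hp : 0 < p) {u : ℂ → ℝ} {r : ℝ}
    (hu : AEStronglyMeasurable (fun φ ↦ u (circleMap 0 r φ)) (volume.restrict (Ioc 0 (2 * π))))
    (hfin : eLpNorm' (fun φ ↦ u (circleMap 0 r φ)) p (volume.restrict (Ioc 0 (2 * π))) ≠ ∞) :
    eLpNorm' (fun φ ↦ u (circleMap 0 r φ)) p (volume.restrict (Ioc 0 (2 * π))) =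
      ENNReal.ofReal ((2 * π) ^ (1 / p) * mpMean p r u) := by
  rw [← ofReal_integral_norm_rpow_eq_eLpNorm' hp hu hfin, mpMean,
    ← Real.mul_rpow (by positivity), ← mul_assoc, mul_one_div_cancel (by positivity), one_mul,
    intervalIntegral.integral_of_le (by positivity)]
  · simp only [circleMap_zero]
  · exact mul_nonneg (by positivity)
      (intervalIntegral.integral_nonneg (by positivity) fun _ _ ↦ by positivity)

lemma hasMeanGrowth_iff_mpMean_le (hp : 0 < p) {u : ℂ → ℝ}
    (h_meas : ∀ᶠ δ in 𝓝[>] 0, AEStronglyMeasurable (fun φ ↦ u (circleMap 0 (1 - δ) φ))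
      (volume.restrict (Ioc 0 (2 * π))))
    (h_fin : ∀ᶠ δ in 𝓝[>] 0, eLpNorm' (fun φ ↦ u (circleMap 0 (1 - δ) φ)) p
      (volume.restrict (Ioc 0 (2 * π))) ≠ ∞) :
    HasMeanGrowth u p a ↔ ∃ C₁ : ℝ, ∃ r₀ ∈ Ico (0 : ℝ) 1, ∀ r ∈ Ioo r₀ 1,
      mpMean p r u ≤ C₁ * (1 - r) ^ a := by
  have h_norm := h_meas.mp (h_fin.mono fun δ h_fin h_meas ↦
    eLpNorm'_circleMap_eq_mpMean (u := u) hp h_meas h_fin)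
  set K := (2 * π) ^ (1 / p)
  have hK₀ : 0 < K := by positivity
  constructor
  · rintro ⟨A, hA, h_bound⟩
    obtain ⟨δ₀, hδ₀, h_sub⟩ :=
      mem_nhdsGT_iff_exists_Ioo_subset.1 (h_norm.and h_bound)
    refine ⟨A.toReal / K, max 0 (1 - δ₀), ⟨le_max_left _ _, max_lt one_pos (by simpa using hδ₀)⟩,
      fun r hr ↦ ?_⟩
    obtain ⟨h_eq, h_le⟩ := h_sub
      (show 1 - r ∈ Ioo 0 δ₀ from ⟨by linarith [hr.2], by linarith [hr.1, le_max_right 0 (1 - δ₀)]⟩)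
    have h_pow : 0 ≤ (1 - r) ^ a := Real.rpow_nonneg (by linarith [hr.2]) _
    rw [h_eq, ← ENNReal.ofReal_toReal hA, ← ENNReal.ofReal_mul ENNReal.toReal_nonneg,
      ENNReal.ofReal_le_ofReal_iff (by positivity), sub_sub_cancel] at h_le
    rwa [div_mul_eq_mul_div, le_div_iff₀' hK₀]
  · rintro ⟨C₁, r₀, hr₀, h_le⟩
    refine ⟨ENNReal.ofReal (K * C₁), ENNReal.ofReal_ne_top, ?_⟩
    filter_upwards [h_norm, Ioo_mem_nhdsGT (sub_pos.2 hr₀.2)] with δ h_eq hδ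
    have h := h_le (1 - δ) ⟨by linarith [hδ.2], by linarith [hδ.1]⟩
    rw [sub_sub_cancel] at h
    rw [h_eq, ← ENNReal.ofReal_mul' (Real.rpow_nonneg hδ.1.le _), mul_assoc]
    exact ENNReal.ofReal_le_ofReal (mul_le_mul_of_nonneg_left h hK₀.le)

lemma carlesonNorm_ne_top [IsFiniteMeasure m] (hp : 0 < p) (s : ℝ) : carlesonNorm m p s ≠ ∞ :=
  ne_top_of_le_ne_top (by finiteness) (carlesonNorm_le hp m s)

lemma ofReal_integral_measure_carlesonBox_rpow [IsFiniteMeasure m] (hp : 0 < p) (s : ℝ) :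
    ENNReal.ofReal ((∫ φ in (0 : ℝ)..(2 * π), (m (carlesonBox φ s)).toReal ^ p) ^ (1 / p)) =
      carlesonNorm m p s := by
  have h_toReal : eLpNorm' (fun φ ↦ (m (carlesonBox φ s)).toReal) p
      (volume.restrict (Ioc 0 (2 * π))) = carlesonNorm m p s :=
    eLpNorm'_congr_enorm_ae <| ae_of_all _ fun φ ↦ by
      rw [Real.enorm_of_nonneg ENNReal.toReal_nonneg, ENNReal.ofReal_toReal (measure_ne_top _ _),
        enorm_eq_self]
  rw [intervalIntegral.integral_of_le (by positivity), ← h_toReal,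
    ← ofReal_integral_norm_rpow_eq_eLpNorm' hp
      (measurable_measure_carlesonBox m s).ennreal_toReal.aestronglyMeasurable
      (h_toReal ▸ carlesonNorm_ne_top hp s)]
  simp only [abs_of_nonneg ENNReal.toReal_nonneg]

lemma isCarlesonOfOrder_of_forall_lt [IsFiniteMeasure m] (hp : 0 < p) (hγ : 0 ≤ γ) {s₀ : ℝ}
    (hs₀ : 0 < s₀) {D : ℝ≥0∞} (hD : D ≠ ∞)
    (h : ∀ s ∈ Ioo 0 s₀, carlesonNorm m p s ≤ D * ENNReal.ofReal (s ^ γ)) :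
    IsCarlesonOfOrder m p γ := by
  set T := m univ * ENNReal.ofReal (2 * π) ^ (1 / p)
  have hT : T ≠ ∞ := by finiteness
  refine ⟨D + T * ENNReal.ofReal ((s₀ ^ γ)⁻¹), by finiteness, fun s hs ↦ ?_⟩
  rw [add_mul]
  by_cases h_lt : s < s₀
  · exact (h s ⟨hs, h_lt⟩).trans le_self_add
  · have h_one : 1 ≤ (s₀ ^ γ)⁻¹ * s ^ γ := by
      rw [inv_mul_eq_div, one_le_div (by positivity)]
      exact Real.rpow_le_rpow hs₀.le (not_lt.1 h_lt) hγ
    refine (carlesonNorm_le hp m s).trans (le_add_left ?_)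
    rw [mul_assoc, ← ENNReal.ofReal_mul (by positivity)]
    exact le_mul_of_one_le_right' (ENNReal.one_le_ofReal.2 h_one)

lemma isCarlesonOfOrder_zero [IsFiniteMeasure m] (hp : 0 < p) : IsCarlesonOfOrder m p 0 :=
  ⟨m univ * ENNReal.ofReal (2 * π) ^ (1 / p), by finiteness, fun s _ ↦ by
    simpa only [Real.rpow_zero, ENNReal.ofReal_one, mul_one] using carlesonNorm_le hp m s⟩

lemma isCarlesonOfOrder_iff_integral_rpow_le [IsFiniteMeasure m] (hp : 0 < p) (hγ : 0 ≤ γ) :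
    IsCarlesonOfOrder m p γ ↔ ∃ C₂ : ℝ, ∀ s ∈ Ioo (0 : ℝ) 1,
      (∫ φ in (0 : ℝ)..(2 * π), (m (carlesonBox φ s)).toReal ^ p) ^ (1 / p) ≤ C₂ * s ^ γ := by
  constructor
  · rintro ⟨D, hD, h⟩
    refine ⟨D.toReal, fun s hs ↦ ?_⟩
    have h_pow : 0 ≤ s ^ γ := Real.rpow_nonneg hs.1.le γ
    rw [← ENNReal.ofReal_le_ofReal_iff (by positivity), ENNReal.ofReal_mul ENNReal.toReal_nonneg,
      ENNReal.ofReal_toReal hD, ofReal_integral_measure_carlesonBox_rpow hp]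
    exact h s hs.1
  · rintro ⟨C₂, h⟩
    refine isCarlesonOfOrder_of_forall_lt hp hγ one_pos (D := ENNReal.ofReal C₂)
      ENNReal.ofReal_ne_top fun s hs ↦ ?_
    rw [← ENNReal.ofReal_mul' (Real.rpow_nonneg hs.1.le γ),
      ← ofReal_integral_measure_carlesonBox_rpow hp]
    exact ENNReal.ofReal_le_ofReal (h s hs)

end MeanGrowth

section RieszRepresentation

variable {μ : Measure ℂ} {ψ : Measure ℝ} {u : ℂ → ℝ} {C p γ δ : ℝ} {z : ℂ}

/-- On every circle in the unit disc, almost everywhere, `u` is given by the Riesz representation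
formula with Riesz measure `μ`, boundary measure `ψ` and additive constant `C`. -/
def HasRieszRepresentation (u : ℂ → ℝ) (μ : Measure ℂ) (ψ : Measure ℝ) (C : ℝ) : Prop :=
  ∀ r ∈ Ioo (0 : ℝ) 1, ∀ᵐ φ : ℝ, u (circleMap 0 r φ) =
    (∫ ζ in ball 0 1, Real.log (pseudoHypDist (circleMap 0 r φ) ζ) ∂μ) -
      1 / (2 * π) * (∫ t, extPoisson (circleMap 0 r φ) (circleMap 0 1 t) ∂ψ) + C

lemma toReal_diskPotential (hz : ‖z‖ < 1) (h : diskPotential μ ψ z ≠ ∞) :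
    (diskPotential μ ψ z).toReal = -(∫ ζ in ball 0 1, Real.log (pseudoHypDist z ζ) ∂μ) +
      1 / (2 * π) * ∫ t, extPoisson z (circleMap 0 1 t) ∂ψ := by
  rw [diskPotential, ENNReal.add_ne_top] at h
  have h_green : ∀ᵐ ζ ∂μ.restrict (ball 0 1), 0 ≤ greenFun z ζ :=
    (ae_restrict_ball_norm_lt_one μ).mono fun ζ hζ ↦ greenFun_nonneg hz hζ.le
  rw [diskPotential, ENNReal.toReal_add h.1 h.2, ENNReal.toReal_mul,
    ENNReal.toReal_ofReal (by positivity),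
    ← integral_eq_lintegral_of_nonneg_ae h_green (by fun_prop),
    ← integral_eq_lintegral_of_nonneg_ae (ae_of_all _ fun t ↦ extPoisson_nonneg hz.le)
      (Measurable.aestronglyMeasurable (by fun_prop)), ← integral_neg]
  rfl

lemma hasMeanGrowth_diskPotential_iff_isCarlesonOfOrder [IsFiniteMeasure ψ]
    (hμ : ∫⁻ ζ in ball (0 : ℂ) 1, ENNReal.ofReal (1 - ‖ζ‖) ∂μ ≠ ∞)
    (hp : 1 ≤ p) (hγ₀ : 0 ≤ γ) (hγ₁ : γ ≤ 1) :
    HasMeanGrowth (diskPotential μ ψ) p (γ - 1) ↔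
      IsCarlesonOfOrder (completeMeasure μ ψ) p γ := by
  have := sFinite_restrict_ball hμ
  have := isFiniteMeasure_completeMeasure (ψ := ψ) hμ
  constructor
  · rintro ⟨A, hA, h_bound⟩
    obtain ⟨δ₀, hδ₀, h_sub⟩ :=
      mem_nhdsGT_iff_exists_Ioo_subset.1 (h_bound.and (Ioo_mem_nhdsGT one_pos))
    refine isCarlesonOfOrder_of_forall_lt (by linarith) hγ₀ hδ₀
      (D := ENNReal.ofReal (72 * π) * A) (by finiteness) fun s hs ↦ ?_
    obtain ⟨h_norm, hs₀, hs₁⟩ := h_sub hs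
    calc carlesonNorm (completeMeasure μ ψ) p s
        ≤ ENNReal.ofReal (72 * π * s) * (A * ENNReal.ofReal (s ^ (γ - 1))) :=
          (carlesonNorm_completeMeasure_le ψ (by linarith) hs₀ hs₁).trans
            (mul_le_mul_right h_norm _)
      _ = ENNReal.ofReal (72 * π) * A * ENNReal.ofReal (s * s ^ (γ - 1)) := by
          rw [ENNReal.ofReal_mul (by positivity), ENNReal.ofReal_mul hs₀.le]
          ring
      _ = ENNReal.ofReal (72 * π) * A * ENNReal.ofReal (s ^ γ) := by
          rw [Real.rpow_sub_one hs₀.ne', mul_div_cancel₀ _ hs₀.ne']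
  · rintro ⟨D, hD, h_box⟩
    refine ⟨D * ENNReal.ofReal (40000 * p), by finiteness, ?_⟩
    filter_upwards [Ioc_mem_nhdsGT (show (0 : ℝ) < 1 / 30 by norm_num)] with δ hδ
    rw [mul_assoc, ← ENNReal.ofReal_mul (by positivity)]
    exact eLpNorm'_diskPotential_circleMap_le hp hγ₁ h_box hδ.1 hδ.2

lemma eventually_ae_diskPotential_lt_top [IsFiniteMeasure ψ]
    (hμ : ∫⁻ ζ in ball (0 : ℂ) 1, ENNReal.ofReal (1 - ‖ζ‖) ∂μ ≠ ∞) :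
    ∀ᶠ δ in 𝓝[>] 0, ∀ᵐ φ ∂volume.restrict (Ioc 0 (2 * π)),
      diskPotential μ ψ (circleMap 0 (1 - δ) φ) < ∞ := by
  have := sFinite_restrict_ball hμ
  have := isFiniteMeasure_completeMeasure (ψ := ψ) hμ
  have h_growth := (hasMeanGrowth_diskPotential_iff_isCarlesonOfOrder (ψ := ψ) hμ le_rfl le_rfl
    zero_le_one).2 (isCarlesonOfOrder_zero one_pos)
  filter_upwards [h_growth.eventually_ne_top] with δ hδ
  exact ae_lt_top (measurable_diskPotential_circleMap _)
    (by simpa [eLpNorm'_eq_lintegral_enorm] using hδ)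

namespace HasRieszRepresentation

lemma eventually_ae_eq_sub_toReal_diskPotential [IsFiniteMeasure ψ]
    (hu : HasRieszRepresentation u μ ψ C)
    (hμ : ∫⁻ ζ in ball (0 : ℂ) 1, ENNReal.ofReal (1 - ‖ζ‖) ∂μ ≠ ∞) :
    ∀ᶠ δ in 𝓝[>] 0, (fun φ ↦ u (circleMap 0 (1 - δ) φ)) =ᵐ[volume.restrict (Ioc 0 (2 * π))]
      fun φ ↦ C - (diskPotential μ ψ (circleMap 0 (1 - δ) φ)).toReal := by
  filter_upwards [eventually_ae_diskPotential_lt_top (ψ := ψ) hμ, Ioo_mem_nhdsGT one_pos]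
    with δ h_lt_top hδ
  filter_upwards [ae_restrict_of_ae (hu (1 - δ) ⟨by linarith [hδ.2], by linarith [hδ.1]⟩),
    h_lt_top] with φ h_repr h_lt_top
  rw [h_repr, toReal_diskPotential _ h_lt_top.ne]
  · ring
  · rw [norm_circleMap_one_sub hδ.2.le]
    linarith [hδ.1]

lemma eventually_aestronglyMeasurable [IsFiniteMeasure ψ] (hu : HasRieszRepresentation u μ ψ C)
    (hμ : ∫⁻ ζ in ball (0 : ℂ) 1, ENNReal.ofReal (1 - ‖ζ‖) ∂μ ≠ ∞) :
    ∀ᶠ δ in 𝓝[>] 0, AEStronglyMeasurable (fun φ ↦ u (circleMap 0 (1 - δ) φ))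
      (volume.restrict (Ioc 0 (2 * π))) := by
  have := sFinite_restrict_ball hμ
  filter_upwards [hu.eventually_ae_eq_sub_toReal_diskPotential hμ] with δ h_eq
  have h_meas := (measurable_diskPotential_circleMap (μ := μ) (ψ := ψ) (1 - δ)).ennreal_toReal
  exact (h_meas.const_sub C).aestronglyMeasurable.congr h_eq.symm

lemma hasMeanGrowth_iff [IsFiniteMeasure ψ] (hu : HasRieszRepresentation u μ ψ C)
    (hμ : ∫⁻ ζ in ball (0 : ℂ) 1, ENNReal.ofReal (1 - ‖ζ‖) ∂μ ≠ ∞)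
    (hp : 1 ≤ p) (hγ : γ ≤ 1) :
    HasMeanGrowth u p (γ - 1) ↔ HasMeanGrowth (diskPotential μ ψ) p (γ - 1) := by
  have := sFinite_restrict_ball hμ
  refine ⟨fun h ↦ h.of_enorm_le_const_add hp (by linarith) (enorm_ne_top (x := C)) ?_ ?_,
    fun h ↦ h.of_enorm_le_const_add hp (by linarith) (enorm_ne_top (x := C)) ?_ ?_⟩
  · exact (hu.eventually_aestronglyMeasurable hμ).mono fun δ h ↦ h.enorm
  · filter_upwards [hu.eventually_ae_eq_sub_toReal_diskPotential hμ,
      eventually_ae_diskPotential_lt_top (ψ := ψ) hμ] with δ h_eq h_lt_top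
    filter_upwards [h_eq, h_lt_top] with φ h_eq h_lt_top
    rw [enorm_eq_self, ← ENNReal.ofReal_toReal h_lt_top.ne, ← Real.enorm_of_nonneg (by positivity),
      show ENNReal.toReal _ = C - u (circleMap 0 (1 - δ) φ) by rw [h_eq]; ring]
    exact enorm_sub_le
  · exact .of_forall fun δ ↦ (measurable_diskPotential_circleMap _).enorm.aemeasurable
  · filter_upwards [hu.eventually_ae_eq_sub_toReal_diskPotential hμ] with δ h_eq
    filter_upwards [h_eq] with φ h_eq
    rw [h_eq]
    refine enorm_sub_le.trans (add_le_add_right ?_ _)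
    rw [Real.enorm_of_nonneg ENNReal.toReal_nonneg, enorm_eq_self]
    exact ENNReal.ofReal_toReal_le

lemma eventually_eLpNorm'_ne_top [IsFiniteMeasure ψ] (hu : HasRieszRepresentation u μ ψ C)
    (hμ : ∫⁻ ζ in ball (0 : ℂ) 1, ENNReal.ofReal (1 - ‖ζ‖) ∂μ ≠ ∞) (hp : 1 ≤ p) :
    ∀ᶠ δ in 𝓝[>] 0, eLpNorm' (fun φ ↦ u (circleMap 0 (1 - δ) φ)) p
      (volume.restrict (Ioc 0 (2 * π))) ≠ ∞ := by
  have := isFiniteMeasure_completeMeasure (ψ := ψ) hμ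
  have h_growth := (hasMeanGrowth_diskPotential_iff_isCarlesonOfOrder (ψ := ψ) hμ hp le_rfl
    zero_le_one).2 (isCarlesonOfOrder_zero (by linarith))
  exact ((hu.hasMeanGrowth_iff hμ hp zero_le_one).2 h_growth).eventually_ne_top

end HasRieszRepresentation

end RieszRepresentation

section AnalyticFunctions

lemma extPoisson_circleMap_zero_one (z : ℂ) (t : ℝ) :
    extPoisson z (circleMap 0 1 t) = (1 - ‖z‖ ^ 2) / ‖exp (t * I) - z‖ ^ 2 := by
  have h_exp : circleMap 0 1 t = exp (t * I) := by simp [circleMap]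
  have h_norm : ‖circleMap 0 1 t‖ = 1 := by simp
  have h_factor : conj (circleMap 0 1 t) * (circleMap 0 1 t - z) =
      1 - z * conj (circleMap 0 1 t) := by
    rw [mul_sub, conj_mul', h_norm, ofReal_one, one_pow, mul_comm z]
  rw [extPoisson, ← h_factor, norm_mul, RCLike.norm_conj, h_norm, one_mul, h_exp]

lemma ae_circleMap_ne_zero {f : ℂ → ℂ} (hf : AnalyticOnNhd ℂ f (ball 0 1))
    (hf₀ : ∃ z ∈ ball (0 : ℂ) 1, f z ≠ 0) {r : ℝ} (hr : r ∈ Ioo (0 : ℝ) 1) :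
    ∀ᵐ φ : ℝ, f (circleMap 0 r φ) ≠ 0 := by
  obtain ⟨w, hw, hfw⟩ := hf₀
  have h_codiscrete := hf.preimage_zero_mem_codiscreteWithin hfw hw
    ((convex_ball (0 : ℂ) 1).isConnected ⟨w, hw⟩)
  have h_discrete : IsDiscrete ((f ⁻¹' {0}ᶜ)ᶜ ∩ ball (0 : ℂ) 1) :=
    isDiscrete_of_codiscreteWithin (by rwa [compl_compl])
  have h_countable : ((f ⁻¹' {0}ᶜ)ᶜ ∩ ball (0 : ℂ) 1).Countable := by
    have := h_discrete.to_subtype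
    exact countable_coe_iff.1 (TopologicalSpace.separableSpace_iff_countable.1 inferInstance)
  refine measure_mono_null (fun φ hφ ↦ ?_)
    ((h_countable.preimage_circleMap 0 hr.1.ne').measure_zero volume)
  refine ⟨by simpa using hφ, ?_⟩
  rw [mem_ball_zero_iff, norm_circleMap_zero, abs_of_pos hr.1]
  exact hr.2

lemma eq_completeMeasure_of_forall {μ m : Measure ℂ} {ψ : Measure ℝ}
    (hm : ∀ M : Set ℂ, MeasurableSet M →
      m M = (∫⁻ ζ in ball (0 : ℂ) 1 ∩ M, ENNReal.ofReal (1 - ‖ζ‖) ∂μ) +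
        ψ ((fun θ : ℝ ↦ exp (θ * I)) ⁻¹' (M ∩ sphere (0 : ℂ) 1))) :
    m = completeMeasure μ ψ := by
  ext M hM
  rw [hm M hM, completeMeasure, Measure.add_apply, withDensity_apply _ hM,
    Measure.restrict_restrict hM, inter_comm, Measure.map_apply (measurable_circleMap 0 1) hM]
  congr 2
  ext θ
  simp [circleMap, norm_exp_ofReal_mul_I]

lemma hasRieszRepresentation_log_norm {f : ℂ → ℂ} {μ : Measure ℂ} {ψ : Measure ℝ} {C : ℝ}
    (hf : AnalyticOnNhd ℂ f (ball 0 1)) (hf₀ : ∃ z ∈ ball (0 : ℂ) 1, f z ≠ 0)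
    (h_repr : ∀ z ∈ ball (0 : ℂ) 1, f z ≠ 0 → Real.log ‖f z‖ =
      (∫ ζ in ball 0 1, Real.log (‖z - ζ‖ / ‖1 - z * conj ζ‖) ∂μ) -
        1 / (2 * π) * (∫ θ, (1 - ‖z‖ ^ 2) / ‖exp (θ * I) - z‖ ^ 2 ∂ψ) + C) :
    HasRieszRepresentation (fun z ↦ Real.log ‖f z‖) μ ψ C := by
  intro r hr
  filter_upwards [ae_circleMap_ne_zero hf hf₀ hr] with φ hφ
  have h_mem : circleMap 0 r φ ∈ ball (0 : ℂ) 1 := by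
    rw [mem_ball_zero_iff, norm_circleMap_zero, abs_of_pos hr.1]
    exact hr.2
  simpa only [pseudoHypDist, extPoisson_circleMap_zero_one] using h_repr _ h_mem hφ

end AnalyticFunctions

theorem stmt1_general (u : ℂ → ℝ) (μ : Measure ℂ) (ψ : Measure ℝ) [IsFiniteMeasure ψ]
    (C γ p : ℝ) (hγ₀ : 0 ≤ γ) (hγ₁ : γ ≤ 1) (hp : 1 ≤ p)
    (hμ : ∫⁻ ζ in ball (0 : ℂ) 1, ENNReal.ofReal (1 - ‖ζ‖) ∂μ ≠ ∞)
    (hu : HasRieszRepresentation u μ ψ C) :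
    (∃ C₁ : ℝ, ∃ r₀ ∈ Ico (0 : ℝ) 1, ∀ r ∈ Ioo r₀ 1, mpMean p r u ≤ C₁ * (1 - r) ^ (γ - 1)) ↔
      ∃ C₂ : ℝ, ∀ δ ∈ Ioo (0 : ℝ) 1,
        (∫ φ in (0 : ℝ)..(2 * π), (completeMeasure μ ψ (carlesonBox φ δ)).toReal ^ p) ^ (1 / p) ≤
          C₂ * δ ^ γ := by
  have := isFiniteMeasure_completeMeasure (ψ := ψ) hμ
  have hp₀ : 0 < p := by linarith
  rw [← isCarlesonOfOrder_iff_integral_rpow_le hp₀ hγ₀,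
    ← hasMeanGrowth_diskPotential_iff_isCarlesonOfOrder hμ hp hγ₀ hγ₁,
    ← hu.hasMeanGrowth_iff hμ hp hγ₁,
    hasMeanGrowth_iff_mpMean_le hp₀ (hu.eventually_aestronglyMeasurable hμ)
      (hu.eventually_eLpNorm'_ne_top hμ hp)]

/-- For a bounded analytic `f ≢ 0` on `𝔻` whose `log|f|` has the
representation with Riesz measure `μ` (unit point masses at the zeros of `f`
counted with multiplicity) and boundary measure `ψ`, and complete measure `λ`,
one has `m_p(r, log|f|) = O((1-r)^{γ-1})` as `r ↑ 1` iff
`(∫₀^{2π} λ(C(φ,δ))^p dφ)^{1/p} = O(δ^γ)` for `0 < δ < 1`. -/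
theorem stmt1 (f : ℂ → ℂ) (μ : Measure ℂ) (ψ : Measure ℝ) [IsFiniteMeasure ψ]
    (lam : Measure ℂ) (C : ℝ) (γ p : ℝ) (hγ : 0 < γ) (hγ1 : γ ≤ 1) (hp : 1 < p)
    -- `f` is analytic and bounded on `𝔻`, not identically zero
    (hf : ∀ z ∈ Metric.ball (0 : ℂ) 1, AnalyticAt ℂ f z)
    (hfbdd : ∃ B : ℝ, ∀ z ∈ Metric.ball (0 : ℂ) 1, ‖f z‖ ≤ B)
    (hf0 : ∃ z ∈ Metric.ball (0 : ℂ) 1, f z ≠ 0)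
    -- `μ` is the Riesz measure of `log|f|`: the sum of unit point masses at the
    -- zeros of `f` counted with multiplicity
    (hμ : ∀ M : Set ℂ, MeasurableSet M →
      μ M = ∑' z : ↥(M ∩ Metric.ball (0 : ℂ) 1),
        (ENat.toENNReal (analyticOrderAt f z.1)))
    (hμfin : ∫⁻ ζ in Metric.ball (0 : ℂ) 1, ENNReal.ofReal (1 - ‖ζ‖) ∂μ < ⊤)
    -- `ψ` is a finite positive Borel measure on `[0,2π)`
    (hψ : ψ (Set.Ico (0 : ℝ) (2 * Real.pi))ᶜ = 0)
    -- representation of `log|f|` off the zero set of `f`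
    (hrep : ∀ z ∈ Metric.ball (0 : ℂ) 1, f z ≠ 0 →
      Real.log (‖f z‖) =
        (∫ ζ in Metric.ball (0 : ℂ) 1,
          Real.log (‖z - ζ‖ / ‖1 - z * (starRingEnd ℂ) ζ‖) ∂μ) -
        (1 / (2 * Real.pi)) *
          (∫ θ, (1 - ‖z‖ ^ 2) / ‖Complex.exp (θ * Complex.I) - z‖ ^ 2 ∂ψ)
        + C)
    -- `λ` is the complete measure of `log|f|`
    (hlam : ∀ M : Set ℂ, MeasurableSet M →
      lam M = (∫⁻ ζ in Metric.ball (0 : ℂ) 1 ∩ M, ENNReal.ofReal (1 - ‖ζ‖) ∂μ) +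
        ψ ((fun θ : ℝ => Complex.exp (θ * Complex.I)) ⁻¹' (M ∩ Metric.sphere (0 : ℂ) 1))) :
    (∃ C₁ : ℝ, ∃ r₀ ∈ Set.Ico (0 : ℝ) 1, ∀ r ∈ Set.Ioo r₀ 1,
        mpMean p r (fun z => Real.log (‖f z‖)) ≤ C₁ * (1 - r) ^ (γ - 1)) ↔
      (∃ C₂ : ℝ, ∀ δ ∈ Set.Ioo (0 : ℝ) 1,
        (∫ φ in (0 : ℝ)..(2 * Real.pi), (lam (carlesonBox φ δ)).toReal ^ p) ^ (1 / p) ≤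
          C₂ * δ ^ γ) := by
  rw [eq_completeMeasure_of_forall hlam]
  exact stmt1_general _ μ ψ C γ p hγ.le hγ1 hp.le hμfin.ne
    (hasRieszRepresentation_log_norm hf hf0 hrep)
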